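/- arXiv:1802.03534 — 5 statements merged into one kernel-verified Lean document; each statement's English description precedes it below -/
import Mathlib

section
/- Let q > 2 be a prime power. Every linear code over GF(q) with parameters [q²+1, 4, q²−q] has exactly two nonzero weights, namely q²−q and q², and its weight enumerator is 1 + (q²−q)(q²+1)·z^{q²−q} + (q−1)(q²+1)·z^{q²}; that is, it has exactly (q²−q)(q²+1) codewords of Hamming weight q²−q, exactly (q−1)(q²+1) codewords of Hamming weight q², and no other nonzero codewords. -/
/-!
Write `z` for the number of zeros of a word. If the words vanishing at three given coordinates
formed a space of dimension at least two, that space would violate the Plotkin bound. Hence any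
`t ≤ 3` coordinates are independent on the code, and counting pairs of a word and a `t`-set of its
zeros gives the first three factorial moments of `z` over the code. By these moments, the sum of
`(z - 1) ^ 2 * (q + 1 - z)` over the nonzero words vanishes. Each term is nonnegative, as the
minimum distance says `z ≤ q + 1`, so `z` is `1` or `q + 1`. The mean weight then determines both
frequencies.
-/

open Finset Module

section ShortenedCodes

variable {ι F : Type*} [Field F]

/-- The subcode of the words of `C` that vanish on `S`. The coordinates in `S` are kept, so the
length does not change. -/
def shorten (C : Submodule F (ι → F)) (S : Finset ι) : Submodule F (ι → F) :=
  C ⊓ Submodule.pi S fun _ => ⊥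

lemma mem_shorten {C : Submodule F (ι → F)} {S : Finset ι} {c : ι → F} :
    c ∈ shorten C S ↔ c ∈ C ∧ ∀ i ∈ S, c i = 0 := by
  simp [shorten, Submodule.mem_pi]

lemma shorten_shorten [DecidableEq ι] (C : Submodule F (ι → F)) (S T : Finset ι) :
    shorten (shorten C S) T = shorten C (S ∪ T) := by
  ext c
  simp only [mem_shorten, mem_union, or_imp, forall_and, and_assoc]

lemma finrank_le_finrank_shorten_add_card [Finite ι] (C : Submodule F (ι → F)) (S : Finset ι) :
    finrank F C ≤ finrank F (shorten C S) + #S := by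
  let restrict : C →ₗ[F] (S → F) := (LinearMap.funLeft F F Subtype.val).domRestrict C
  have ker_le : (LinearMap.ker restrict).map C.subtype ≤ shorten C S := by
    rintro _ ⟨c, hc, rfl⟩
    exact mem_shorten.2 ⟨c.2, fun i hi => congrFun hc ⟨i, hi⟩⟩
  calc finrank F C = finrank F restrict.range + finrank F restrict.ker :=
        (LinearMap.finrank_range_add_finrank_ker restrict).symm
    _ ≤ finrank F (S → F) + finrank F (shorten C S) := by
        gcongr
        · exact Submodule.finrank_le _
        · simpa only [Submodule.finrank_map_subtype_eq] using Submodule.finrank_mono ker_le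
    _ = finrank F (shorten C S) + #S := by simp [add_comm]

lemma natCard_le_natCard_mul_natCard_shorten_singleton [Finite ι] [Finite F]
    (C : Submodule F (ι → F)) (i : ι) :
    Nat.card C ≤ Nat.card F * Nat.card (shorten C {i}) := by
  rw [natCard_eq_pow_finrank (K := F) (V := C),
    natCard_eq_pow_finrank (K := F) (V := shorten C {i}), ← pow_succ']
  exact Nat.pow_le_pow_right Nat.card_pos
    (by simpa using finrank_le_finrank_shorten_add_card C {i})

lemma natCard_shorten_eq_card_filter (C : Submodule F (ι → F)) [Fintype C] (S : Finset ι)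
    [DecidablePred fun c : C => ∀ i ∈ S, (c : ι → F) i = 0] :
    Nat.card (shorten C S) = #{c : C | ∀ i ∈ S, (c : ι → F) i = 0} := by
  rw [← Fintype.card_subtype, ← Nat.card_eq_fintype_card]
  exact Nat.card_congr <| (Equiv.subtypeEquivRight fun c => mem_shorten).trans
    (Equiv.subtypeSubtypeEquivSubtypeInter _ _).symm

end ShortenedCodes

section PlotkinBound

variable {ι F : Type*} [Field F] [DecidableEq F]

lemma natCard_mul_card_filter_ne_zero_le [Finite ι] [Finite F] (C : Submodule F (ι → F))
    [Fintype C] (i : ι) :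
    Nat.card F * #{c : C | (c : ι → F) i ≠ 0} ≤ (Nat.card F - 1) * Nat.card C := by
  have partition : #{c : C | (c : ι → F) i = 0} + #{c : C | (c : ι → F) i ≠ 0} = Nat.card C := by
    rw [card_filter_add_card_filter_not, card_univ, Nat.card_eq_fintype_card]
  have zeros : Nat.card C ≤ Nat.card F * #{c : C | (c : ι → F) i = 0} := by
    simpa [natCard_shorten_eq_card_filter] using
      natCard_le_natCard_mul_natCard_shorten_singleton C i
  rw [Nat.sub_mul, one_mul, ← partition, mul_add]
  omega

lemma sum_hammingNorm_eq_sum_card_filter [Fintype ι] (C : Submodule F (ι → F)) [Fintype C] :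
    ∑ c : C, hammingNorm (c : ι → F) = ∑ i, #{c : C | (c : ι → F) i ≠ 0} :=
  sum_card_bipartiteAbove_eq_sum_card_bipartiteBelow fun (c : C) i => (c : ι → F) i ≠ 0

theorem plotkin_bound [Fintype ι] [Finite F] (C : Submodule F (ι → F)) (T : Finset ι)
    (hT : ∀ c ∈ C, ∀ i ∉ T, c i = 0) {d : ℕ} (hd : ∀ c ∈ C, c ≠ 0 → d ≤ hammingNorm c) :
    Nat.card F * ((Nat.card C - 1) * d) ≤ (Nat.card F - 1) * (#T * Nat.card C) := by
  cases nonempty_fintype C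
  classical
  have lower : (Nat.card C - 1) * d ≤ ∑ c : C, hammingNorm (c : ι → F) := by
    calc (Nat.card C - 1) * d = #(univ.erase (0 : C)) • d := by
          simp [card_erase_of_mem]
      _ ≤ ∑ c ∈ univ.erase (0 : C), hammingNorm (c : ι → F) :=
          card_nsmul_le_sum _ _ _ fun c hc => hd c c.2 (by simpa using hc)
      _ ≤ ∑ c : C, hammingNorm (c : ι → F) :=
          sum_le_sum_of_subset (erase_subset _ _)
  have support : ∑ i, #{c : C | (c : ι → F) i ≠ 0} = ∑ i ∈ T, #{c : C | (c : ι → F) i ≠ 0} :=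
    (sum_subset (subset_univ T) fun i _ hi => by simp [hT _ (Subtype.prop _) i hi]).symm
  calc Nat.card F * ((Nat.card C - 1) * d)
      ≤ Nat.card F * ∑ i ∈ T, #{c : C | (c : ι → F) i ≠ 0} := by
        rw [← support, ← sum_hammingNorm_eq_sum_card_filter]
        gcongr
    _ ≤ #T • ((Nat.card F - 1) * Nat.card C) := by
        rw [mul_sum]
        exact sum_le_card_nsmul _ _ _ fun i _ => natCard_mul_card_filter_ne_zero_le C i
    _ = (Nat.card F - 1) * (#T * Nat.card C) := by
        rw [smul_eq_mul, mul_left_comm]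

end PlotkinBound

section Moments

variable {ι F : Type*} [Fintype ι] [Field F]

/-- The set of coordinates at which `c` vanishes, that is, the complement of its support. -/
def zeroCoords [DecidableEq F] (c : ι → F) : Finset ι := {i | c i = 0}

lemma card_zeroCoords_add_hammingNorm [DecidableEq F] (c : ι → F) :
    #(zeroCoords c) + hammingNorm c = Fintype.card ι :=
  card_filter_add_card_filter_not _

lemma subset_zeroCoords_iff [DecidableEq F] {c : ι → F} {S : Finset ι} :
    S ⊆ zeroCoords c ↔ ∀ i ∈ S, c i = 0 := by
  simp [subset_iff, zeroCoords]

theorem sum_choose_card_zeroCoords [DecidableEq F] (C : Submodule F (ι → F)) [Fintype C]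
    (t : ℕ) :
    ∑ c : C, (#(zeroCoords (c : ι → F))).choose t =
      ∑ S ∈ powersetCard t univ, Nat.card (shorten C S) := by
  classical
  have choose_eq (c : C) : (#(zeroCoords (c : ι → F))).choose t =
      #{S ∈ powersetCard t univ | ∀ i ∈ S, (c : ι → F) i = 0} := by
    rw [← card_powersetCard]
    congr 1
    ext S
    simp [mem_powersetCard, subset_zeroCoords_iff, and_comm]
  simp only [choose_eq, natCard_shorten_eq_card_filter]
  exact sum_card_bipartiteAbove_eq_sum_card_bipartiteBelow
    fun (c : C) (S : Finset ι) => ∀ i ∈ S, (c : ι → F) i = 0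

/-- Any `t` coordinates are linearly independent functionals on `C`: the words of `C` form an
orthogonal array of strength `t`, equivalently the dual code has minimum distance greater
than `t` (for `t` at most the length). Independence is expressed by the dimension of the shortened
codes. -/
def HasStrength (C : Submodule F (ι → F)) (t : ℕ) : Prop :=
  ∀ S : Finset ι, #S = t → finrank F (shorten C S) + t = finrank F C

lemma HasStrength.mono {C : Submodule F (ι → F)} {s t : ℕ} (hC : HasStrength C t) (hst : s ≤ t)
    (ht : t ≤ Fintype.card ι) : HasStrength C s := by
  classical
  intro S hS
  obtain ⟨T, hST, -, hT⟩ := exists_subsuperset_card_eq (subset_univ S) (hS.trans_le hst) ht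
  have shorten_eq : shorten (shorten C S) (T \ S) = shorten C T := by
    rw [shorten_shorten, union_sdiff_of_subset hST]
  have lower := finrank_le_finrank_shorten_add_card C S
  have upper := finrank_le_finrank_shorten_add_card (shorten C S) (T \ S)
  rw [shorten_eq, card_sdiff_of_subset hST] at upper
  have := hC T hT
  omega

theorem HasStrength.sum_descFactorial_card_zeroCoords [Finite F] [DecidableEq F]
    {C : Submodule F (ι → F)} [Fintype C] {k t : ℕ} (hC : HasStrength C t)
    (hk : finrank F C = k + t) :
    ∑ c : C, (#(zeroCoords (c : ι → F))).descFactorial t =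
      (Fintype.card ι).descFactorial t * Nat.card F ^ k := by
  have natCard_shorten (S : Finset ι) (hS : #S = t) : Nat.card (shorten C S) = Nat.card F ^ k := by
    rw [natCard_eq_pow_finrank (K := F), Nat.add_right_cancel ((hC S hS).trans hk)]
  simp only [Nat.descFactorial_eq_factorial_mul_choose, ← mul_sum, sum_choose_card_zeroCoords]
  rw [sum_congr rfl fun S hS => natCard_shorten S (mem_powersetCard.1 hS).2, sum_const,
    card_powersetCard, card_univ, smul_eq_mul, mul_assoc]

theorem HasStrength.sum_eval_descPochhammer_card_zeroCoords [Finite F] [DecidableEq F]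
    {C : Submodule F (ι → F)} [Fintype C] {k t : ℕ} (hC : HasStrength C t)
    (hk : finrank F C = k + t) :
    ∑ c : C, (descPochhammer ℤ t).eval (#(zeroCoords (c : ι → F)) : ℤ) =
      (descPochhammer ℤ t).eval (Fintype.card ι : ℤ) * (Nat.card F : ℤ) ^ k := by
  simp only [descPochhammer_eval_eq_descFactorial]
  exact_mod_cast hC.sum_descFactorial_card_zeroCoords hk

lemma HasStrength.sum_hammingNorm_sub [Finite F] [DecidableEq F] {C : Submodule F (ι → F)}
    [Fintype C] {k : ℕ} (hC : HasStrength C 1) (hk : finrank F C = k + 1) (b : ℤ) :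
    ∑ c : C, ((hammingNorm (c : ι → F) : ℤ) - b) =
      (Fintype.card ι - b) * (Nat.card F : ℤ) ^ (k + 1)
        - Fintype.card ι * (Nat.card F : ℤ) ^ k := by
  have card_words : (Fintype.card C : ℤ) = (Nat.card F : ℤ) ^ (k + 1) := by
    rw [← Nat.card_eq_fintype_card, natCard_eq_pow_finrank (K := F) (V := C), hk, Nat.cast_pow]
  have sum_zeros := hC.sum_eval_descPochhammer_card_zeroCoords hk
  simp only [descPochhammer_one, Polynomial.eval_X] at sum_zeros
  have weight_eq (c : C) : (hammingNorm (c : ι → F) : ℤ) - b =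
      Fintype.card ι - b - #(zeroCoords (c : ι → F)) := by
    rw [← card_zeroCoords_add_hammingNorm (c : ι → F), Nat.cast_add]
    ring
  simp only [weight_eq]
  rw [sum_sub_distrib, sum_zeros, sum_const, card_univ, nsmul_eq_mul, card_words, mul_comm]

end Moments

section TwoWeightCodes

variable {ι F : Type*} [Fintype ι] [Field F] [DecidableEq F]

lemma ncard_setOf_hammingNorm_eq (C : Submodule F (ι → F)) [Fintype C] (w : ℕ) :
    {c : ι → F | c ∈ C ∧ hammingNorm c = w}.ncard = #{c : C | hammingNorm (c : ι → F) = w} := by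
  rw [← Fintype.card_subtype, ← Nat.card_eq_fintype_card, ← Nat.card_coe_set_eq]
  exact Nat.card_congr (Equiv.subtypeSubtypeEquivSubtypeInter _ _).symm

lemma sum_hammingNorm_sub_of_two_weights {C : Submodule F (ι → F)} [Fintype C] {a b : ℕ}
    (ha : a ≠ 0) (hC : ∀ c ∈ C, c ≠ 0 → hammingNorm c = a ∨ hammingNorm c = b) :
    ∑ c : C, ((hammingNorm (c : ι → F) : ℤ) - b) =
      {c : ι → F | c ∈ C ∧ hammingNorm c = a}.ncard * ((a : ℤ) - b) - b := by
  classical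
  have summand (c : C) : (hammingNorm (c : ι → F) : ℤ) - b =
      (if hammingNorm (c : ι → F) = a then (a : ℤ) - b else 0) - if c = 0 then (b : ℤ) else 0 := by
    rcases eq_or_ne c 0 with rfl | hc
    · simp [ha.symm]
    · rcases hC c c.2 (by simpa using hc) with h | h
      · simp [h, hc]
      · rw [h, if_neg hc]
        split_ifs with hba <;> simp [hba]
  simp only [summand, sum_sub_distrib, sum_ite_eq', mem_univ, if_true, ← sum_filter, sum_const,
    nsmul_eq_mul, ncard_setOf_hammingNorm_eq, mul_sub]

end TwoWeightCodes

section OvoidCodes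

variable {q : ℕ} {ι F : Type*} [Fintype ι] [Field F] [DecidableEq F] {C : Submodule F (ι → F)}

lemma finrank_shorten_le_one_of_card_eq_three [Finite F] (hF : Nat.card F = q)
    (hι : Fintype.card ι = q ^ 2 + 1) (hd : ∀ c ∈ C, c ≠ 0 → q ^ 2 - q ≤ hammingNorm c)
    {S : Finset ι} (hS : #S = 3) : finrank F (shorten C S) ≤ 1 := by
  classical
  have hq : 1 < q := hF ▸ Finite.one_lt_card
  have plotkin := plotkin_bound (shorten C S) Sᶜ
    (fun c hc i hi => (mem_shorten.1 hc).2 i (by simpa using hi))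
    fun c hc => hd c (mem_shorten.1 hc).1
  have card_compl : (#Sᶜ : ℤ) = q ^ 2 - 2 := by
    have := card_add_card_compl S
    zify [hS, hι] at this
    linarith
  rw [natCard_eq_pow_finrank (K := F) (V := shorten C S), hF] at plotkin
  zify [hq.le, Nat.one_le_pow (finrank F (shorten C S)) q (by omega),
    Nat.le_self_pow two_ne_zero q, card_compl] at plotkin
  have two_mul_le : 2 * (q : ℤ) ^ finrank F (shorten C S) ≤ q ^ 2 := by
    have hq' : (0 : ℤ) < q - 1 := by omega
    refine le_of_mul_le_mul_left ?_ hq'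
    linarith
  have pow_lt : q ^ finrank F (shorten C S) < q ^ 2 := by
    zify
    have : (0 : ℤ) < q ^ finrank F (shorten C S) := by positivity
    linarith
  exact Nat.le_of_lt_succ ((Nat.pow_lt_pow_iff_right hq).1 pow_lt)

variable (q C) in
/-- A code with the parameters `[q ^ 2 + 1, 4, ≥ q ^ 2 - q]` of an ovoid code over the field with
`q` elements. -/
structure IsOvoidCode : Prop where
  natCard_field : Nat.card F = q
  card_coords : Fintype.card ι = q ^ 2 + 1
  finrank_eq : finrank F C = 4
  le_hammingNorm : ∀ c ∈ C, c ≠ 0 → q ^ 2 - q ≤ hammingNorm c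

namespace IsOvoidCode

lemma one_lt [Finite F] (hC : IsOvoidCode q C) : 1 < q :=
  hC.natCard_field ▸ Finite.one_lt_card

lemma card_zeroCoords_eq (hC : IsOvoidCode q C) (c : ι → F) :
    (#(zeroCoords c) : ℤ) = q ^ 2 + 1 - hammingNorm c := by
  have := card_zeroCoords_add_hammingNorm c
  zify [hC.card_coords] at this
  linarith

lemma card_zeroCoords_le (hC : IsOvoidCode q C) {c : ι → F} (hc : c ∈ C) (hc₀ : c ≠ 0) :
    #(zeroCoords c) ≤ q + 1 := by
  have total := card_zeroCoords_add_hammingNorm c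
  have weight := hC.le_hammingNorm c hc hc₀
  have := hC.card_coords
  omega

lemma hasStrength [Finite F] (hC : IsOvoidCode q C) {t : ℕ} (ht : t ≤ 3) : HasStrength C t := by
  have strength_three : HasStrength C 3 := fun S hS => by
    have lower := finrank_le_finrank_shorten_add_card C S
    have upper := finrank_shorten_le_one_of_card_eq_three hC.natCard_field hC.card_coords
      hC.le_hammingNorm hS
    have := hC.finrank_eq
    omega
  exact strength_three.mono ht (by nlinarith [hC.card_coords, hC.one_lt])

lemma sum_eval_descPochhammer [Finite F] [Fintype C] (hC : IsOvoidCode q C) {k t : ℕ}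
    (hkt : 4 = k + t) (ht : t ≤ 3) :
    ∑ c : C, (descPochhammer ℤ t).eval (#(zeroCoords (c : ι → F)) : ℤ) =
      (descPochhammer ℤ t).eval ((q : ℤ) ^ 2 + 1) * (q : ℤ) ^ k := by
  simpa only [hC.card_coords, hC.natCard_field, Nat.cast_add, Nat.cast_pow, Nat.cast_one] using
    (hC.hasStrength ht).sum_eval_descPochhammer_card_zeroCoords (hC.finrank_eq.trans hkt)

-- The right-hand side is the summand at the zero word, which has `q ^ 2 + 1` zeros.
lemma sum_sq_mul_card_zeroCoords [Finite F] [Fintype C] (hC : IsOvoidCode q C) :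
    ∑ c : C, ((#(zeroCoords (c : ι → F)) : ℤ) - 1) ^ 2 * (q + 1 - #(zeroCoords (c : ι → F))) =
      ((q ^ 2 + 1 : ℤ) - 1) ^ 2 * (q + 1 - (q ^ 2 + 1)) := by
  have moment₀ := hC.sum_eval_descPochhammer (k := 4) (t := 0) rfl (by simp)
  have moment₁ := hC.sum_eval_descPochhammer (k := 3) (t := 1) rfl (by simp)
  have moment₂ := hC.sum_eval_descPochhammer (k := 2) (t := 2) rfl (by simp)
  have moment₃ := hC.sum_eval_descPochhammer (k := 1) (t := 3) rfl (by simp)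
  have expansion (z : ℤ) : (z - 1) ^ 2 * (q + 1 - z) =
      q * (descPochhammer ℤ 2).eval z - (descPochhammer ℤ 3).eval z
        - (q + 1) * (descPochhammer ℤ 1).eval z + (q + 1) * (descPochhammer ℤ 0).eval z := by
    simp only [descPochhammer_succ_eval, descPochhammer_zero, Polynomial.eval_one]
    push_cast
    ring
  simp only [expansion, sum_add_distrib, sum_sub_distrib, ← mul_sum, moment₀, moment₁, moment₂,
    moment₃]
  simp only [descPochhammer_succ_eval, descPochhammer_zero, Polynomial.eval_one]
  push_cast
  ring

lemma card_zeroCoords_eq_one_or [Finite F] (hC : IsOvoidCode q C) {c : ι → F} (hc : c ∈ C)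
    (hc₀ : c ≠ 0) : (#(zeroCoords c) : ℤ) = 1 ∨ (#(zeroCoords c) : ℤ) = q + 1 := by
  classical
  cases nonempty_fintype C
  let p (c : ι → F) : ℤ := ((#(zeroCoords c) : ℤ) - 1) ^ 2 * (q + 1 - #(zeroCoords c))
  have p_nonneg : ∀ x ∈ univ.erase (0 : C), 0 ≤ p x := fun x hx => by
    have := hC.card_zeroCoords_le x.2 (by simpa using hx)
    have : (0 : ℤ) ≤ q + 1 - #(zeroCoords (x : ι → F)) := by omega
    positivity
  have sum_p : ∑ x ∈ univ.erase (0 : C), p x = 0 := by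
    have p_zero : p (0 : C) = ((q ^ 2 + 1 : ℤ) - 1) ^ 2 * (q + 1 - (q ^ 2 + 1)) := by
      simp [p, hC.card_zeroCoords_eq]
    rw [sum_erase_eq_sub (mem_univ _), p_zero, ← hC.sum_sq_mul_card_zeroCoords, sub_self]
  have p_eq_zero : p c = 0 :=
    (sum_eq_zero_iff_of_nonneg p_nonneg).1 sum_p ⟨c, hc⟩ (by simpa using hc₀)
  rcases mul_eq_zero.1 p_eq_zero with h | h
  · exact .inl (sub_eq_zero.1 (pow_eq_zero_iff two_ne_zero |>.1 h))
  · exact .inr (sub_eq_zero.1 h).symm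

theorem hammingNorm_eq_or [Finite F] (hC : IsOvoidCode q C) {c : ι → F} (hc : c ∈ C)
    (hc₀ : c ≠ 0) : hammingNorm c = q ^ 2 - q ∨ hammingNorm c = q ^ 2 := by
  zify [Nat.le_self_pow two_ne_zero q]
  rcases hC.card_zeroCoords_eq_one_or hc hc₀ with h | h <;> rw [hC.card_zeroCoords_eq] at h
  · right; linarith
  · left; linarith

lemma sum_hammingNorm_sub [Finite F] [Fintype C] (hC : IsOvoidCode q C) (b : ℤ) :
    ∑ c : C, ((hammingNorm (c : ι → F) : ℤ) - b) =
      (q ^ 2 + 1 - b) * q ^ 4 - (q ^ 2 + 1) * q ^ 3 := by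
  simpa only [hC.natCard_field, hC.card_coords, Nat.cast_add, Nat.cast_pow, Nat.cast_one] using
    (hC.hasStrength (t := 1) (by simp)).sum_hammingNorm_sub hC.finrank_eq b

theorem ncard_hammingNorm_eq_sq_sub [Finite F] (hC : IsOvoidCode q C) :
    {c : ι → F | c ∈ C ∧ hammingNorm c = q ^ 2 - q}.ncard = (q ^ 2 - q) * (q ^ 2 + 1) := by
  cases nonempty_fintype C
  have hq := hC.one_lt
  have weight_ne_zero : q ^ 2 - q ≠ 0 := Nat.sub_ne_zero_of_lt (by nlinarith)
  have count := sum_hammingNorm_sub_of_two_weights weight_ne_zero fun _ => hC.hammingNorm_eq_or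
  rw [hC.sum_hammingNorm_sub] at count
  zify [Nat.le_self_pow two_ne_zero q] at count ⊢
  have hq₀ : (q : ℤ) ≠ 0 := by positivity
  refine mul_left_cancel₀ hq₀ ?_
  linear_combination count

theorem ncard_hammingNorm_eq_sq [Finite F] (hC : IsOvoidCode q C) :
    {c : ι → F | c ∈ C ∧ hammingNorm c = q ^ 2}.ncard = (q - 1) * (q ^ 2 + 1) := by
  cases nonempty_fintype C
  have hq := hC.one_lt
  have weight_ne_zero : q ^ 2 ≠ 0 := by positivity
  have count := sum_hammingNorm_sub_of_two_weights weight_ne_zero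
    fun _ hc hc₀ => (hC.hammingNorm_eq_or hc hc₀).symm
  rw [hC.sum_hammingNorm_sub] at count
  zify [Nat.le_self_pow two_ne_zero q, hq.le] at count ⊢
  have hq₀ : (q : ℤ) ≠ 0 := by positivity
  refine mul_left_cancel₀ hq₀ ?_
  linear_combination -count

end IsOvoidCode

theorem ovoid_code_weight_enumerator_general [Finite F] (hF : Nat.card F = q)
    (hι : Fintype.card ι = q ^ 2 + 1) (hdim : finrank F C = 4)
    (hlb : ∀ c ∈ C, c ≠ 0 → q ^ 2 - q ≤ hammingNorm c) :
    {c : ι → F | c ∈ C ∧ hammingNorm c = q ^ 2 - q}.ncard = (q ^ 2 - q) * (q ^ 2 + 1) ∧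
    {c : ι → F | c ∈ C ∧ hammingNorm c = q ^ 2}.ncard = (q - 1) * (q ^ 2 + 1) ∧
    ∀ c ∈ C, c ≠ 0 → hammingNorm c = q ^ 2 - q ∨ hammingNorm c = q ^ 2 :=
  have hC : IsOvoidCode q C := ⟨hF, hι, hdim, hlb⟩
  ⟨hC.ncard_hammingNorm_eq_sq_sub, hC.ncard_hammingNorm_eq_sq, fun _ => hC.hammingNorm_eq_or⟩

end OvoidCodes

/-- Any linear code over GF(q), q > 2 a prime power, with parameters
[q²+1, 4, q²−q] has exactly (q²−q)(q²+1) codewords of weight q²−q,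
exactly (q−1)(q²+1) codewords of weight q², and no other nonzero codewords. -/
theorem ovoid_code_weight_enumerator {q : ℕ} (F : Type) [Field F] [Fintype F] [DecidableEq F]
    (hF : Fintype.card F = q) (hq : 2 < q)
    (C : Submodule F (Fin (q ^ 2 + 1) → F))
    (hdim : Module.finrank F C = 4)
    (hlb : ∀ c ∈ C, c ≠ 0 → q ^ 2 - q ≤ hammingNorm c)
    (hex : ∃ c ∈ C, c ≠ 0 ∧ hammingNorm c = q ^ 2 - q) :
    {c : Fin (q ^ 2 + 1) → F | c ∈ C ∧ hammingNorm c = q ^ 2 - q}.ncard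
        = (q ^ 2 - q) * (q ^ 2 + 1) ∧
    {c : Fin (q ^ 2 + 1) → F | c ∈ C ∧ hammingNorm c = q ^ 2}.ncard
        = (q - 1) * (q ^ 2 + 1) ∧
    ∀ c ∈ C, c ≠ 0 → hammingNorm c = q ^ 2 - q ∨ hammingNorm c = q ^ 2 := by
  exact ovoid_code_weight_enumerator_general (Nat.card_eq_fintype_card.trans hF)
    (Fintype.card_fin _) hdim hlb
end

section
/- Let q > 2 be a prime power, let C be a linear code over GF(q) with parameters [q²+1, 4, q²−q], and let G be a 4 × (q²+1) generator matrix of C (a matrix whose rows form a basis of C). Then the q²+1 column vectors of G are nonzero, pairwise non-proportional over GF(q) (so they span q²+1 distinct points of PG(3,q)), and any three distinct columns are linearly independent over GF(q); hence the columns of G form an ovoid in PG(3,q). -/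
open Matrix

/-!
If three columns of `G` were dependent, the codewords vanishing at these three positions would form
a subcode of dimension at least two. Averaging the weight over the `q²` words of a two-dimensional
subcode, each of the `q² - 2` remaining positions is nonzero in at most `q² - q` words, so the
`q² - 1` nonzero words cannot all have weight at least `q² - q`.
-/

open Finset Module

theorem card_mul_card_apply_ne_zero_le {A B : Type*} [AddGroup A] [AddGroup B] [Fintype A]
    [Finite B] [DecidableEq B] (f : A →+ B) :
    Nat.card B * #{a | f a ≠ 0} ≤ (Nat.card B - 1) * Nat.card A := by
  have card_ker : #{a | f a = 0} = Nat.card f.ker := by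
    rw [← Fintype.card_subtype, ← Nat.card_eq_fintype_card]
    rfl
  have card_le : Nat.card A ≤ Nat.card B * #{a | f a = 0} := by
    rw [card_ker, mul_comm, ← f.ker.card_mul_index, AddSubgroup.index_ker]
    exact Nat.mul_le_mul_left _ (Nat.card_le_card_of_injective _ Subtype.val_injective)
  have card_split : #{a | f a = 0} + #{a | f a ≠ 0} = Nat.card A := by
    rw [card_filter_add_card_filter_not, card_univ, Nat.card_eq_fintype_card]
  rw [Nat.sub_mul, one_mul]
  apply Nat.le_sub_of_add_le
  calc Nat.card B * #{a | f a ≠ 0} + Nat.card A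
      ≤ Nat.card B * #{a | f a ≠ 0} + Nat.card B * #{a | f a = 0} := by gcongr
    _ = Nat.card B * Nat.card A := by rw [← mul_add, add_comm, card_split]

section AdditiveCode

variable {ι A : Type*} [Fintype ι] [AddGroup A] [DecidableEq A]
  {C : AddSubgroup (ι → A)} [Fintype C]

theorem card_sub_one_mul_le_sum_hammingNorm {d : ℕ}
    (hd : ∀ c ∈ C, c ≠ 0 → d ≤ hammingNorm c) :
    (Nat.card C - 1) * d ≤ ∑ c : C, hammingNorm (c : ι → A) := by
  classical
  calc (Nat.card C - 1) * d = #(univ.erase (0 : C)) • d := by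
        rw [card_erase_of_mem (mem_univ _), card_univ, Nat.card_eq_fintype_card, smul_eq_mul]
    _ ≤ ∑ c ∈ univ.erase (0 : C), hammingNorm (c : ι → A) :=
        card_nsmul_le_sum _ _ _ fun c hc ↦
          hd c c.2 fun h ↦ ne_of_mem_erase hc (Subtype.ext h)
    _ ≤ ∑ c : C, hammingNorm (c : ι → A) := sum_le_sum_of_subset (subset_univ _)

theorem card_mul_sum_hammingNorm_le [Finite A] {S : Finset ι}
    (hS : ∀ c ∈ C, ∀ j ∈ S, c j = 0) :
    Nat.card A * ∑ c : C, hammingNorm (c : ι → A) ≤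
      (Fintype.card ι - #S) * ((Nat.card A - 1) * Nat.card C) := by
  classical
  have double_count : ∑ c : C, hammingNorm (c : ι → A) = ∑ j, #{c : C | (c : ι → A) j ≠ 0} := by
    simp only [hammingNorm, card_filter]
    exact sum_comm
  have sum_eq_sum_compl :
      ∑ j, #{c : C | (c : ι → A) j ≠ 0} = ∑ j ∈ Sᶜ, #{c : C | (c : ι → A) j ≠ 0} := by
    refine (sum_subset (subset_univ _) fun j _ hj ↦ ?_).symm
    rw [card_eq_zero, filter_eq_empty_iff]
    exact fun c _ ↦ not_not.2 (hS c c.2 j (by simpa using hj))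
  rw [double_count, sum_eq_sum_compl, mul_sum, ← card_compl, ← smul_eq_mul #Sᶜ]
  exact sum_le_card_nsmul _ _ _ fun j _ ↦
    card_mul_card_apply_ne_zero_le ((Pi.evalAddMonoidHom _ j).comp C.subtype)

end AdditiveCode

theorem plotkin_bound_of_vanishing {ι A : Type*} [Fintype ι] [AddGroup A] [Finite A] [DecidableEq A]
    {C : AddSubgroup (ι → A)} {S : Finset ι} {d : ℕ} (hS : ∀ c ∈ C, ∀ j ∈ S, c j = 0)
    (hd : ∀ c ∈ C, c ≠ 0 → d ≤ hammingNorm c) :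
    Nat.card A * ((Nat.card C - 1) * d) ≤
      (Fintype.card ι - #S) * ((Nat.card A - 1) * Nat.card C) := by
  have := Fintype.ofFinite C
  exact (Nat.mul_le_mul_left _ (card_sub_one_mul_le_sum_hammingNorm hd)).trans
    (card_mul_sum_hammingNorm_le hS)

theorem plotkin_lt_of_ovoid_parameters {q : ℕ} (hq : 1 < q) :
    (q ^ 2 + 1 - 3) * ((q - 1) * q ^ 2) < q * ((q ^ 2 - 1) * (q ^ 2 - q)) := by
  have four_le : 2 ^ 2 ≤ q ^ 2 := Nat.pow_le_pow_left hq 2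
  have pos : 0 < (q - 1) * q ^ 2 := Nat.mul_pos (Nat.sub_pos_of_lt hq) (by omega)
  calc (q ^ 2 + 1 - 3) * ((q - 1) * q ^ 2)
      < (q ^ 2 - 1) * ((q - 1) * q ^ 2) := Nat.mul_lt_mul_of_pos_right (by omega) pos
    _ = q * ((q ^ 2 - 1) * (q * (q - 1))) := by ring
    _ = q * ((q ^ 2 - 1) * (q ^ 2 - q)) := by rw [Nat.mul_sub_one, ← sq]

theorem exists_submodule_le_finrank_eq {K V : Type*} [DivisionRing K] [AddCommGroup V]
    [Module K V] {W : Submodule K V} {m : ℕ} (hm : m ≤ finrank K W) :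
    ∃ U ≤ W, finrank K U = m := by
  obtain ⟨b, hb⟩ := exists_linearIndependent_of_le_finrank hm
  refine ⟨(Submodule.span K (Set.range b)).map W.subtype, Submodule.map_subtype_le _ _, ?_⟩
  rw [Submodule.finrank_map_subtype_eq, finrank_span_eq_card hb, Fintype.card_fin]

theorem linearIndependent_triple_iff {ι R M : Type*} [Semiring R] [AddCommMonoid M] [Module R M]
    {v : ι → M} {i j k : ι} (hij : i ≠ j) (hik : i ≠ k) (hjk : j ≠ k) :
    LinearIndependent R ![v i, v j, v k] ↔ LinearIndepOn R v {i, j, k} := by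
  have range_eq : Set.range ![i, j, k] = {i, j, k} := by
    ext
    simp [Matrix.range_cons, or_comm, or_left_comm]
  have injective : Function.Injective ![i, j, k] := by
    simp [Function.Injective, Fin.forall_fin_succ, hij, hik, hjk, hij.symm, hik.symm, hjk.symm]
  rw [← range_eq, linearIndepOn_range_iff injective, ← FinVec.map_eq]
  rfl

section LinearCode

variable {F κ ι : Type*} [Field F]

/-- The shortening of the linear code `C` at the positions in `S`, i.e. its subcode of words
vanishing on `S`. The zero coordinates are kept, so that it has the same length as `C`. -/
def shortenedCode (C : Submodule F (ι → F)) (S : Set ι) : Submodule F (ι → F) :=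
  C ⊓ LinearMap.ker (LinearMap.funLeft F F ((↑) : S → ι))

theorem shortenedCode_le (C : Submodule F (ι → F)) (S : Set ι) : shortenedCode C S ≤ C :=
  inf_le_left

theorem apply_eq_zero_of_mem_shortenedCode {C : Submodule F (ι → F)} {S : Set ι} {c : ι → F}
    (hc : c ∈ shortenedCode C S) {j : ι} (hj : j ∈ S) : c j = 0 :=
  congrFun (LinearMap.mem_ker.1 hc.2) ⟨j, hj⟩

theorem finrank_map_add_finrank_shortenedCode (C : Submodule F (ι → F)) [Module.Finite F C]
    (S : Set ι) :
    finrank F (C.map (LinearMap.funLeft F F ((↑) : S → ι))) + finrank F (shortenedCode C S) =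
      finrank F C := by
  set restrict := LinearMap.funLeft F F ((↑) : S → ι)
  have finrank_ker :
      finrank F (LinearMap.ker (restrict.domRestrict C)) = finrank F (shortenedCode C S) := by
    rw [LinearMap.ker_domRestrict, ← Submodule.finrank_map_subtype_eq,
      Submodule.map_comap_subtype, shortenedCode]
  rw [← finrank_ker, ← LinearMap.range_domRestrict]
  exact (restrict.domRestrict C).finrank_range_add_finrank_ker

theorem finrank_map_funLeft_span_row [Finite κ] (G : Matrix κ ι F) (S : Set ι) [Finite S] :
    finrank F ((Submodule.span F (Set.range G.row)).map (LinearMap.funLeft F F ((↑) : S → ι))) =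
      finrank F (Submodule.span F (Set.range fun j : S ↦ G.col j)) := by
  have := Fintype.ofFinite κ
  have := Fintype.ofFinite S
  let G' : Matrix κ S F := G.submatrix id (↑)
  calc _ = finrank F (Submodule.span F (Set.range G'.row)) := by
        rw [Submodule.map_span, ← Set.range_comp]
        rfl
    _ = finrank F (Submodule.span F (Set.range G'.col)) := by
        rw [← G'.rank_eq_finrank_span_row, ← G'.rank_eq_finrank_span_cols]

variable [Fintype κ]

theorem card_lt_finrank_shortenedCode_add_card {G : Matrix κ ι F}
    (hG : LinearIndependent F G.row) {S : Finset ι} (hS : ¬ LinearIndepOn F G.col (S : Set ι)) :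
    Fintype.card κ < finrank F (shortenedCode (Submodule.span F (Set.range G.row)) S) + #S := by
  have finrank_col_lt :
      finrank F (Submodule.span F (Set.range fun j : (S : Set ι) ↦ G.col j)) < #S := by
    by_contra! h
    exact hS (linearIndependent_iff_card_le_finrank_span.2 (by simpa [Set.finrank] using h))
  have := FiniteDimensional.span_of_finite F (Set.finite_range G.row)
  have rank_nullity :=
    finrank_map_add_finrank_shortenedCode (Submodule.span F (Set.range G.row)) (S : Set ι)
  rw [finrank_map_funLeft_span_row, finrank_span_eq_card hG] at rank_nullity
  omega

variable [Fintype F] [DecidableEq F] [Fintype ι] {G : Matrix κ ι F}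

theorem linearIndepOn_col_of_plotkin_lt (hG : LinearIndependent F G.row) {d m : ℕ}
    (hd : ∀ c ∈ Submodule.span F (Set.range G.row), c ≠ 0 → d ≤ hammingNorm c) {S : Finset ι}
    (hm : m + #S ≤ Fintype.card κ + 1)
    (hlt : (Fintype.card ι - #S) * ((Fintype.card F - 1) * Fintype.card F ^ m) <
      Fintype.card F * ((Fintype.card F ^ m - 1) * d)) :
    LinearIndepOn F G.col (S : Set ι) := by
  by_contra hS
  have le_finrank := card_lt_finrank_shortenedCode_add_card hG hS
  obtain ⟨D, hD, finrank_D⟩ := exists_submodule_le_finrank_eq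
    (W := shortenedCode (Submodule.span F (Set.range G.row)) S) (m := m) (by omega)
  have card_D : Nat.card D.toAddSubgroup = Fintype.card F ^ m := by
    rw [← finrank_D, ← Nat.card_eq_fintype_card]
    exact Module.natCard_eq_pow_finrank (K := F) (V := D)
  have plotkin := plotkin_bound_of_vanishing (C := D.toAddSubgroup) (S := S) (d := d)
    (fun c hc j hj ↦ apply_eq_zero_of_mem_shortenedCode (hD hc) hj)
    (fun c hc ↦ hd c (shortenedCode_le _ _ (hD hc)))
  rw [card_D, Nat.card_eq_fintype_card] at plotkin
  exact plotkin.not_gt hlt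

theorem linearIndepOn_col_of_ovoid_parameters (hκ : Fintype.card κ = 4)
    (hι : Fintype.card ι = Fintype.card F ^ 2 + 1) (hG : LinearIndependent F G.row)
    (hd : ∀ c ∈ Submodule.span F (Set.range G.row), c ≠ 0 →
      Fintype.card F ^ 2 - Fintype.card F ≤ hammingNorm c)
    {S : Finset ι} (hS : #S ≤ 3) : LinearIndepOn F G.col (S : Set ι) := by
  have one_lt_q : 1 < Fintype.card F := Fintype.one_lt_card
  obtain ⟨T, hST, hT⟩ := exists_superset_card_eq hS (by rw [hι]; nlinarith)
  refine LinearIndepOn.mono ?_ (coe_subset.2 hST)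
  apply linearIndepOn_col_of_plotkin_lt hG hd (m := 2) (by omega)
  rw [hι, hT]
  exact plotkin_lt_of_ovoid_parameters one_lt_q

end LinearCode

theorem columns_of_ovoid_code_generator_matrix_form_ovoid_general {F κ ι : Type*}
    [Field F] [Fintype F] [DecidableEq F] [Fintype κ] [Fintype ι] (hκ : Fintype.card κ = 4)
    (hι : Fintype.card ι = Fintype.card F ^ 2 + 1) (G : Matrix κ ι F)
    (hG : LinearIndependent F G.row)
    (hd : ∀ c ∈ Submodule.span F (Set.range G.row), c ≠ 0 →
      Fintype.card F ^ 2 - Fintype.card F ≤ hammingNorm c) :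
    (∀ j, Gᵀ j ≠ 0) ∧
    (∀ j₁ j₂, j₁ ≠ j₂ → ∀ c : F, Gᵀ j₂ ≠ c • Gᵀ j₁) ∧
    (∀ j₁ j₂ j₃, j₁ ≠ j₂ → j₁ ≠ j₃ → j₂ ≠ j₃ →
      LinearIndependent F ![Gᵀ j₁, Gᵀ j₂, Gᵀ j₃]) := by
  classical
  have indep {S : Finset ι} (hS : #S ≤ 3) : LinearIndepOn F G.col (S : Set ι) :=
    linearIndepOn_col_of_ovoid_parameters hκ hι hG hd hS
  have col_ne_zero (j : ι) : G.col j ≠ 0 :=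
    (indep (S := {j}) (by simp)).ne_zero (by simp)
  refine ⟨col_ne_zero, fun j₁ j₂ h₁₂ c ↦ ?_, fun j₁ j₂ j₃ h₁₂ h₁₃ h₂₃ ↦ ?_⟩
  · have indep_pair := indep (card_le_two (a := j₁) (b := j₂) |>.trans (by norm_num))
    rw [coe_pair, linearIndepOn_pair_iff _ h₁₂ (col_ne_zero j₁)] at indep_pair
    exact (indep_pair c).symm
  · have indep_triple := indep (card_le_three (a := j₁) (b := j₂) (c := j₃))
    rw [coe_insert, coe_pair] at indep_triple
    exact (linearIndependent_triple_iff h₁₂ h₁₃ h₂₃).2 indep_triple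

/-- If `G` is a generator matrix of a `[q²+1, 4, q²−q]` code over GF(q)
(q > 2 a prime power), then the columns of `G` are nonzero, pairwise non-proportional,
and any three distinct columns are linearly independent; i.e. they form an ovoid in
PG(3,q). -/
theorem columns_of_ovoid_code_generator_matrix_form_ovoid {q : ℕ}
    (F : Type) [Field F] [Fintype F] [DecidableEq F]
    (hF : Fintype.card F = q) (hq : 2 < q)
    (C : Submodule F (Fin (q ^ 2 + 1) → F))
    (hdim : Module.finrank F C = 4)
    (hlb : ∀ c ∈ C, c ≠ 0 → q ^ 2 - q ≤ hammingNorm c)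
    (hex : ∃ c ∈ C, c ≠ 0 ∧ hammingNorm c = q ^ 2 - q)
    (G : Matrix (Fin 4) (Fin (q ^ 2 + 1)) F)
    (hrows_indep : LinearIndependent F (fun k : Fin 4 => G k))
    (hrows_span : Submodule.span F (Set.range fun k : Fin 4 => G k) = C) :
    (∀ j, Gᵀ j ≠ 0) ∧
    (∀ j₁ j₂, j₁ ≠ j₂ → ∀ c : F, Gᵀ j₂ ≠ c • Gᵀ j₁) ∧
    (∀ j₁ j₂ j₃, j₁ ≠ j₂ → j₁ ≠ j₃ → j₂ ≠ j₃ →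
      LinearIndependent F ![Gᵀ j₁, Gᵀ j₂, Gᵀ j₃]) := by
  subst hF hrows_span
  exact columns_of_ovoid_code_generator_matrix_form_ovoid_general
    (Fintype.card_fin 4) (Fintype.card_fin _) G hrows_indep hlb
end

section
/- Let q > 2 be a prime power and let v₁, …, v_{q²+1} ∈ GF(q)^4 be nonzero vectors spanning the q²+1 points of an ovoid V in PG(3,q) (one spanning vector per point). Then the linear code C_V = { (u·v₁, u·v₂, …, u·v_{q²+1}) : u ∈ GF(q)^4 } over GF(q), where u·v denotes the standard dot product, is a linear code with parameters [q²+1, 4, q²−q], and its only nonzero weights are q²−q and q². -/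
/-!
A codeword `(u · vᵢ)ᵢ` vanishes exactly at the points of the ovoid in the plane `u · x = 0`, so the
claim is that every plane meets the ovoid in `1` or `q + 1` points. A plane meets a cap in at most
`q + 2` points. If no plane attains this bound, the `q + 1` planes through a secant contain exactly
`q + 1` points each, and counting modulo `q` along a line of a plane without points rules out such
planes.

If some plane has `q + 2` points then `q` is even, so plane sections with `q + 1` points have a
nucleus, and the nuclei on the tangents at a point of the `(q + 2)`-plane turn out to lie on no
secant at all. Hence there are `q + 1` points on no secant, one on each tangent of the ovoid. The
ovoid together with these nuclei meets each plane in `0` or `q + 2` points; counting along a line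
that misses both gives `q + 2 ∣ q ^ 2 + q + 2`, that is, `q + 2 ∣ 4`.
-/

open Module Finset

namespace OvoidCode

variable {F V : Type*} [Field F] [AddCommGroup V] [Module F V]

local notation "q" => Nat.card F

/-! ### Points, lines and planes as subspaces -/

lemma exists_le_finrank_eq {W : Submodule F V} {n : ℕ} (hn : n ≤ finrank F W) :
    ∃ L ≤ W, finrank F L = n := by
  obtain ⟨b, hb⟩ := exists_linearIndependent_of_le_finrank hn
  have hb' : LinearIndependent F (W.subtype ∘ b) := hb.map' W.subtype W.ker_subtype
  refine ⟨Submodule.span F (Set.range (W.subtype ∘ b)), ?_, ?_⟩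
  · rw [Submodule.span_le]
    rintro _ ⟨i, rfl⟩
    exact (b i).2
  · rw [finrank_span_eq_card hb', Fintype.card_fin]

section FiniteDimensional

variable [FiniteDimensional F V] {A B C L x y : Submodule F V}

lemma eq_of_le_of_finrank_eq_one (hx : finrank F x = 1) (hy : finrank F y = 1) (hxy : x ≤ y) :
    x = y :=
  Submodule.eq_of_le_of_finrank_eq hxy (hx.trans hy.symm)

lemma finrank_sup_of_not_le (hx : finrank F x = 1) (hxA : ¬ x ≤ A) :
    finrank F ↥(A ⊔ x) = finrank F A + 1 := by
  have h_dim := Submodule.finrank_sup_add_finrank_inf_eq A x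
  have h_inf : finrank F ↥(A ⊓ x) < finrank F x :=
    Submodule.finrank_lt_finrank_of_lt (inf_le_right.lt_of_ne fun h ↦ hxA (inf_eq_right.mp h))
  omega

lemma finrank_sup_eq_two (hx : finrank F x = 1) (hy : finrank F y = 1) (hxy : x ≠ y) :
    finrank F ↥(x ⊔ y) = 2 := by
  rw [finrank_sup_of_not_le hy fun h ↦ hxy (eq_of_le_of_finrank_eq_one hy hx h).symm, hx]

lemma sup_eq_of_finrank_eq_two (hx : finrank F x = 1) (hy : finrank F y = 1) (hxy : x ≠ y)
    (hL : finrank F L = 2) (hxL : x ≤ L) (hyL : y ≤ L) : x ⊔ y = L :=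
  Submodule.eq_of_le_of_finrank_eq (sup_le hxL hyL) ((finrank_sup_eq_two hx hy hxy).trans hL.symm)

lemma finrank_inf_of_ne {k : ℕ} (hAC : A ≤ C) (hBC : B ≤ C) (hAB : A ≠ B)
    (hA : finrank F A = k + 1) (hB : finrank F B = k + 1) (hC : finrank F C = k + 2) :
    finrank F ↥(A ⊓ B) = k := by
  have h_dim := Submodule.finrank_sup_add_finrank_inf_eq A B
  have h_sup_le : finrank F ↥(A ⊔ B) ≤ finrank F C := Submodule.finrank_mono (sup_le hAC hBC)
  have h_lt_sup : finrank F A < finrank F ↥(A ⊔ B) := by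
    refine Submodule.finrank_lt_finrank_of_lt (left_lt_sup.mpr fun hBA ↦ hAB ?_)
    exact (Submodule.eq_of_le_of_finrank_eq hBA (hB.trans hA.symm)).symm
  omega

end FiniteDimensional

/-! ### Caps and nuclei -/

open Classical in
/-- The members of `X` contained in `W`; for a set `X` of points, the intersection of `X` with the
projective subspace `W`. -/
noncomputable def pointsIn (X : Finset (Submodule F V)) (W : Submodule F V) :
    Finset (Submodule F V) :=
  {x ∈ X | x ≤ W}

/-- A cap: a set of points of the projective space of `V`, given as one-dimensional subspaces, no
three of which are on a line. -/
structure IsCap (X : Finset (Submodule F V)) : Prop where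
  finrank_eq_one : ∀ x ∈ X, finrank F x = 1
  card_pointsIn_le_two : ∀ L : Submodule F V, finrank F L = 2 → #(pointsIn X L) ≤ 2

/-- `N` is a nucleus of the section of `X` by `W`: a point of `W` off `X` through which no secant
of `X` in `W` passes. -/
structure IsNucleus (X : Finset (Submodule F V)) (W N : Submodule F V) : Prop where
  finrank_eq_one : finrank F N = 1
  notMem : N ∉ X
  le : N ≤ W
  card_pointsIn_le_one : ∀ L ≤ W, finrank F L = 2 → N ≤ L → #(pointsIn X L) ≤ 1

section PointsIn

variable {X : Finset (Submodule F V)} {B L N P R W W' x y : Submodule F V}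

@[simp]
lemma mem_pointsIn : x ∈ pointsIn X W ↔ x ∈ X ∧ x ≤ W := by
  simp [pointsIn]

lemma pointsIn_top : pointsIn X ⊤ = X := by
  ext; simp

lemma card_pointsIn_mono (h : W ≤ W') : #(pointsIn X W) ≤ #(pointsIn X W') :=
  card_le_card fun x hx ↦ by
    rw [mem_pointsIn] at hx ⊢
    exact ⟨hx.1, hx.2.trans h⟩

lemma one_le_card_pointsIn (hx : x ∈ X) (hxW : x ≤ W) : 1 ≤ #(pointsIn X W) :=
  card_pos.mpr ⟨x, mem_pointsIn.mpr ⟨hx, hxW⟩⟩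

lemma two_le_card_pointsIn (hx : x ∈ X) (hy : y ∈ X) (hxy : x ≠ y) (hxW : x ≤ W) (hyW : y ≤ W) :
    2 ≤ #(pointsIn X W) :=
  one_lt_card.mpr ⟨x, mem_pointsIn.mpr ⟨hx, hxW⟩, y, mem_pointsIn.mpr ⟨hy, hyW⟩, hxy⟩

lemma exists_mem_le_of_card_pointsIn_pos (h : 0 < #(pointsIn X W)) : ∃ x ∈ X, x ≤ W := by
  obtain ⟨x, hx⟩ := card_pos.mp h
  exact ⟨x, mem_pointsIn.mp hx⟩

lemma exists_mem_le_ne (h : 2 ≤ #(pointsIn X W)) (x : Submodule F V) :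
    ∃ y ∈ X, y ≤ W ∧ y ≠ x := by
  obtain ⟨y, hy, hyx⟩ := exists_mem_ne h x
  exact ⟨y, (mem_pointsIn.mp hy).1, (mem_pointsIn.mp hy).2, hyx⟩

lemma eq_of_card_pointsIn_le_one (h : #(pointsIn X W) ≤ 1) (hx : x ∈ X) (hxW : x ≤ W)
    (hy : y ∈ X) (hyW : y ≤ W) : x = y :=
  card_le_one.mp h x (mem_pointsIn.mpr ⟨hx, hxW⟩) y (mem_pointsIn.mpr ⟨hy, hyW⟩)

lemma IsNucleus.mono (hN : IsNucleus X W N) (hBW : B ≤ W) (hNB : N ≤ B) : IsNucleus X B N :=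
  ⟨hN.finrank_eq_one, hN.notMem, hNB, fun L hLB ↦ hN.card_pointsIn_le_one L (hLB.trans hBW)⟩

variable [FiniteDimensional F V]

lemma pointsIn_eq_singleton (hX : ∀ x ∈ X, finrank F x = 1) (hP : P ∈ X) : pointsIn X P = {P} := by
  ext x
  rw [mem_pointsIn, mem_singleton]
  constructor
  · rintro ⟨hx, hxP⟩
    exact eq_of_le_of_finrank_eq_one (hX x hx) (hX P hP) hxP
  · rintro rfl
    exact ⟨hP, le_rfl⟩

lemma pointsIn_eq_empty (hX : ∀ x ∈ X, finrank F x = 1) (hR : finrank F R = 1) (hRX : R ∉ X) :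
    pointsIn X R = ∅ := by
  refine eq_empty_of_forall_notMem fun x hx ↦ hRX ?_
  obtain ⟨hx, hxR⟩ := mem_pointsIn.mp hx
  rwa [← eq_of_le_of_finrank_eq_one (hX x hx) hR hxR]

end PointsIn

/-! ### Pencils -/

section Pencil

variable [Finite V] {X : Finset (Submodule F V)} {A B R W x : Submodule F V}

/-- The subspaces of `B` of dimension one more than `A` that contain `A`: the points of `B` for
`A = ⊥`, the lines of `B` through `A` for a point `A`, the planes of `B` through `A` for a line
`A`. -/
noncomputable def pencil (A B : Submodule F V) : Finset (Submodule F V) :=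
  {W : Submodule F V | A ≤ W ∧ W ≤ B ∧ finrank F W = finrank F A + 1}.toFinite.toFinset

@[simp]
lemma mem_pencil : W ∈ pencil A B ↔ A ≤ W ∧ W ≤ B ∧ finrank F W = finrank F A + 1 := by
  simp [pencil]

open Classical in
lemma card_filter_le_pencil (hAB : A ≤ B) (hx : finrank F x = 1) (hxB : x ≤ B) (hxA : ¬ x ≤ A) :
    #{W ∈ pencil A B | x ≤ W} = 1 := by
  refine card_eq_one.mpr ⟨A ⊔ x, ?_⟩
  ext W
  simp only [mem_filter, mem_pencil, mem_singleton]
  constructor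
  · rintro ⟨⟨hAW, -, hW⟩, hxW⟩
    exact (Submodule.eq_of_le_of_finrank_eq (sup_le hAW hxW)
      ((finrank_sup_of_not_le hx hxA).trans hW.symm)).symm
  · rintro rfl
    exact ⟨⟨le_sup_left, sup_le hAB hxB, finrank_sup_of_not_le hx hxA⟩, le_sup_right⟩

lemma sum_card_pointsIn_pencil (hX : ∀ x ∈ X, finrank F x = 1) (hAB : A ≤ B) :
    ∑ W ∈ pencil A B, #(pointsIn X W) + #(pointsIn X A)
      = #(pointsIn X B) + #(pencil A B) * #(pointsIn X A) := by
  classical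
  have h_below : ∀ W ∈ pencil A B,
      #((pointsIn X B).bipartiteBelow (· ≤ ·) W) = #(pointsIn X W) := by
    intro W hW
    have hWB := (mem_pencil.mp hW).2.1
    congr 1
    ext x
    simp only [mem_bipartiteBelow, mem_pointsIn]
    exact ⟨fun h ↦ ⟨h.1.1, h.2⟩, fun h ↦ ⟨⟨h.1, h.2.trans hWB⟩, h.2⟩⟩
  have h_above : ∀ x ∈ pointsIn X B, #((pencil A B).bipartiteAbove (· ≤ ·) x)
      + (if x ≤ A then 1 else 0) = 1 + #(pencil A B) * (if x ≤ A then 1 else 0) := by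
    intro x hx
    obtain ⟨hx, hxB⟩ := mem_pointsIn.mp hx
    split_ifs with hxA
    · have h_all : (pencil A B).bipartiteAbove (· ≤ ·) x = pencil A B :=
        filter_true_of_mem fun W hW ↦ hxA.trans (mem_pencil.mp hW).1
      rw [h_all]
      ring
    · rw [bipartiteAbove, card_filter_le_pencil hAB (hX x hx) hxB hxA]
      ring
  have h_A : ∑ x ∈ pointsIn X B, (if x ≤ A then 1 else 0) = #(pointsIn X A) := by
    rw [← card_filter]
    congr 1
    ext x
    simp only [mem_filter, mem_pointsIn]
    exact ⟨fun h ↦ ⟨h.1.1, h.2⟩, fun h ↦ ⟨⟨h.1, h.2.trans hAB⟩, h.2⟩⟩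
  rw [← sum_congr rfl h_below, ← sum_card_bipartiteAbove_eq_sum_card_bipartiteBelow, ← h_A,
    ← sum_add_distrib, sum_congr rfl h_above, sum_add_distrib, ← mul_sum, sum_const,
    smul_eq_mul, mul_one]

lemma sum_card_pointsIn_pencil_of_card_eq_zero (hX : ∀ x ∈ X, finrank F x = 1) (hAB : A ≤ B)
    (hA : #(pointsIn X A) = 0) : ∑ W ∈ pencil A B, #(pointsIn X W) = #(pointsIn X B) := by
  simpa [hA] using sum_card_pointsIn_pencil hX hAB

lemma sum_card_pointsIn_pencil_of_notMem (hX : ∀ x ∈ X, finrank F x = 1) (hR : finrank F R = 1)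
    (hRX : R ∉ X) (hRW : R ≤ W) : ∑ L ∈ pencil R W, #(pointsIn X L) = #(pointsIn X W) :=
  sum_card_pointsIn_pencil_of_card_eq_zero hX hRW (by rw [pointsIn_eq_empty hX hR hRX, card_empty])

lemma card_sdiff_eq_pow_sub_pow (hAB : A ≤ B) :
    #((B : Set V) \ A).toFinite.toFinset = q ^ finrank F B - q ^ finrank F A := by
  rw [← Set.ncard_eq_toFinset_card, Set.ncard_sdiff hAB, ← natCard_eq_pow_finrank,
    ← natCard_eq_pow_finrank]
  rfl

lemma card_pencil_mul (hAB : A ≤ B) :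
    #(pencil A B) * (q ^ (finrank F A + 1) - q ^ finrank F A)
      = q ^ finrank F B - q ^ finrank F A := by
  classical
  let vectors : Finset V := ((B : Set V) \ A).toFinite.toFinset
  have h_below : ∀ W ∈ pencil A B,
      #(vectors.bipartiteBelow (· ∈ ·) W) = q ^ (finrank F A + 1) - q ^ finrank F A := by
    intro W hW
    obtain ⟨hAW, hWB, hW⟩ := mem_pencil.mp hW
    rw [← hW, ← card_sdiff_eq_pow_sub_pow hAW]
    congr 1
    ext v
    have := @hWB v
    simp only [mem_bipartiteBelow, vectors, Set.Finite.mem_toFinset, Set.mem_sdiff, SetLike.mem_coe]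
    tauto
  have h_above : ∀ v ∈ vectors, #((pencil A B).bipartiteAbove (· ∈ ·) v) = 1 := by
    intro v hv
    obtain ⟨hvB, hvA⟩ : v ∈ B ∧ v ∉ A := by simpa [vectors] using hv
    have hv_ne : v ≠ 0 := fun h ↦ hvA (h ▸ A.zero_mem)
    simpa [bipartiteAbove] using card_filter_le_pencil hAB (finrank_span_singleton (K := F) hv_ne)
      (by simpa using hvB) (by simpa using hvA)
  calc #(pencil A B) * (q ^ (finrank F A + 1) - q ^ finrank F A)
      = ∑ W ∈ pencil A B, #(vectors.bipartiteBelow (· ∈ ·) W) := by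
        rw [sum_congr rfl h_below, sum_const, smul_eq_mul]
    _ = #vectors := by
        rw [← sum_card_bipartiteAbove_eq_sum_card_bipartiteBelow, sum_congr rfl h_above,
          card_eq_sum_ones]
    _ = q ^ finrank F B - q ^ finrank F A := card_sdiff_eq_pow_sub_pow hAB

variable [Finite F]

lemma card_pencil {k : ℕ} (hAB : A ≤ B) (hB : finrank F B = finrank F A + k) :
    #(pencil A B) = ∑ i ∈ range k, q ^ i := by
  have h_mul := card_pencil_mul hAB
  obtain ⟨r, hr⟩ : ∃ r, q = r + 1 := ⟨q - 1, by have := Finite.one_lt_card (α := F); omega⟩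
  have hr_pos : 0 < r := by have := Finite.one_lt_card (α := F); omega
  have h_geom := geom_sum_mul_add r k
  rw [hB, hr, pow_succ, pow_add, ← h_geom, ← Nat.mul_sub_one, ← Nat.mul_sub_one, mul_left_comm,
    Nat.add_sub_cancel, Nat.add_sub_cancel] at h_mul
  rw [hr]
  exact Nat.eq_of_mul_eq_mul_right hr_pos (Nat.eq_of_mul_eq_mul_left (by positivity) h_mul)

lemma card_pencil_of_finrank_add_two (hAB : A ≤ B) (hB : finrank F B = finrank F A + 2) :
    #(pencil A B) = q + 1 := by
  simp [card_pencil hAB hB, sum_range_succ, add_comm]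

lemma card_pencil_of_finrank_add_three (hAB : A ≤ B) (hB : finrank F B = finrank F A + 3) :
    #(pencil A B) = q ^ 2 + q + 1 := by
  rw [card_pencil hAB hB]
  simp only [sum_range_succ, range_zero, sum_empty]
  ring

end Pencil

/-! ### Tangent lines of caps -/

section Cap

variable [Finite V] {X : Finset (Submodule F V)} {L P R W : Submodule F V}

/-- The lines of `W` through `R` that meet `X` in exactly one point. All tangent lines of `W` are
obtained for `R = ⊥`. -/
noncomputable def tangents (X : Finset (Submodule F V)) (R W : Submodule F V) :
    Finset (Submodule F V) :=
  {L : Submodule F V | R ≤ L ∧ L ≤ W ∧ finrank F L = 2 ∧ #(pointsIn X L) = 1}.toFinite.toFinset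

@[simp]
lemma mem_tangents :
    L ∈ tangents X R W ↔ R ≤ L ∧ L ≤ W ∧ finrank F L = 2 ∧ #(pointsIn X L) = 1 := by
  simp [tangents]

lemma tangents_eq_filter_pencil (hR : finrank F R = 1) :
    tangents X R W = {L ∈ pencil R W | #(pointsIn X L) = 1} := by
  ext L
  simp [hR, and_assoc]

lemma IsCap.card_tangents_add_card_pointsIn (h : IsCap X) (hP : P ∈ X) (hPW : P ≤ W) :
    #(tangents X P W) + #(pointsIn X W) = #(pencil P W) + 1 := by
  have hP_one := h.finrank_eq_one P hP
  have h_line : ∀ L ∈ pencil P W,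
      #(pointsIn X L) + (if #(pointsIn X L) = 1 then 1 else 0) = 2 := by
    intro L hL
    obtain ⟨hPL, -, hL⟩ := mem_pencil.mp hL
    have h_le := h.card_pointsIn_le_two L (by rw [hL, hP_one])
    have h_ge := one_le_card_pointsIn hP hPL
    split_ifs <;> omega
  have h_sum := sum_congr rfl h_line
  rw [sum_add_distrib, ← card_filter, ← tangents_eq_filter_pencil hP_one, sum_const,
    smul_eq_mul] at h_sum
  have h_pencil := sum_card_pointsIn_pencil h.finrank_eq_one hPW
  rw [pointsIn_eq_singleton h.finrank_eq_one hP, card_singleton] at h_pencil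
  omega

lemma IsCap.card_tangents_modEq_card_pointsIn (h : IsCap X) (hR : finrank F R = 1) (hRX : R ∉ X)
    (hRW : R ≤ W) : #(tangents X R W) ≡ #(pointsIn X W) [MOD 2] := by
  rw [← sum_card_pointsIn_pencil_of_notMem h.finrank_eq_one hR hRX hRW,
    tangents_eq_filter_pencil hR, card_filter]
  refine Nat.ModEq.sum fun L hL ↦ ?_
  have h_le := h.card_pointsIn_le_two L (by rw [(mem_pencil.mp hL).2.2, hR])
  rw [Nat.ModEq]
  split_ifs <;> omega

variable [Finite F]

lemma IsCap.exists_finrank_eq_one_notMem (h : IsCap X) (hL : finrank F L = 2) :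
    ∃ R ≤ L, finrank F R = 1 ∧ R ∉ X := by
  by_contra! h_all
  have h_sub : pencil ⊥ L ⊆ pointsIn X L := fun R hR ↦ by
    obtain ⟨-, hRL, hR⟩ := mem_pencil.mp hR
    exact mem_pointsIn.mpr ⟨h_all R hRL (by simpa using hR), hRL⟩
  have h_le := (card_le_card h_sub).trans (h.card_pointsIn_le_two L hL)
  rw [card_pencil_of_finrank_add_two bot_le (by simp [hL])] at h_le
  have := Finite.one_lt_card (α := F)
  omega

/-! ### Plane sections of caps -/

lemma IsCap.card_tangents_add_card_pointsIn_plane (h : IsCap X) (hW : finrank F W = 3)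
    (hP : P ∈ X) (hPW : P ≤ W) : #(tangents X P W) + #(pointsIn X W) = q + 2 := by
  rw [h.card_tangents_add_card_pointsIn hP hPW,
    card_pencil_of_finrank_add_two hPW (by rw [hW, h.finrank_eq_one P hP])]

lemma IsCap.card_pointsIn_plane_le (h : IsCap X) (hW : finrank F W = 3) :
    #(pointsIn X W) ≤ q + 2 := by
  obtain hW_zero | hW_pos := Nat.eq_zero_or_pos #(pointsIn X W)
  · omega
  obtain ⟨P, hP, hPW⟩ := exists_mem_le_of_card_pointsIn_pos hW_pos
  have := h.card_tangents_add_card_pointsIn_plane hW hP hPW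
  omega

lemma IsCap.card_pointsIn_plane_le_of_tangent (h : IsCap X) (hW : finrank F W = 3)
    (hL : finrank F L = 2) (hL_one : #(pointsIn X L) = 1) (hLW : L ≤ W) :
    #(pointsIn X W) ≤ q + 1 := by
  obtain ⟨P, hP, hPL⟩ := exists_mem_le_of_card_pointsIn_pos (by omega : 0 < #(pointsIn X L))
  have h_count := h.card_tangents_add_card_pointsIn_plane hW hP (hPL.trans hLW)
  have h_pos : 0 < #(tangents X P W) := card_pos.mpr ⟨L, by simp [hPL, hLW, hL, hL_one]⟩
  omega

lemma IsCap.card_pointsIn_eq_zero_or_two (h : IsCap X) (hW : finrank F W = 3)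
    (hW_card : #(pointsIn X W) = q + 2) (hL : finrank F L = 2) (hLW : L ≤ W) :
    #(pointsIn X L) = 0 ∨ #(pointsIn X L) = 2 := by
  have h_le := h.card_pointsIn_le_two L hL
  have h_ne_one : #(pointsIn X L) ≠ 1 := fun hL_one ↦ by
    have := h.card_pointsIn_plane_le_of_tangent hW hL hL_one hLW
    omega
  omega

lemma IsCap.exists_point_notMem_of_hyperoval (h : IsCap X) (hW_card : #(pointsIn X W) = q + 2) :
    ∃ R ≤ W, finrank F R = 1 ∧ R ∉ X := by
  obtain ⟨x, hx, hxW⟩ := exists_mem_le_of_card_pointsIn_pos (by omega : 0 < #(pointsIn X W))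
  obtain ⟨y, hy, hyW, hyx⟩ := exists_mem_le_ne (by omega : 2 ≤ #(pointsIn X W)) x
  obtain ⟨R, hR_le, hR⟩ := h.exists_finrank_eq_one_notMem
    (finrank_sup_eq_two (h.finrank_eq_one x hx) (h.finrank_eq_one y hy) hyx.symm)
  exact ⟨R, hR_le.trans (sup_le hxW hyW), hR⟩

lemma IsCap.even_card_of_hyperoval (h : IsCap X) (hW : finrank F W = 3)
    (hW_card : #(pointsIn X W) = q + 2) : Even q := by
  obtain ⟨R, hRW, hR, hRX⟩ := h.exists_point_notMem_of_hyperoval hW_card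
  have h_empty : tangents X R W = ∅ := eq_empty_of_forall_notMem fun L hL ↦ by
    obtain ⟨-, hLW, hL, hL_one⟩ := mem_tangents.mp hL
    have := h.card_pointsIn_eq_zero_or_two hW hW_card hL hLW
    omega
  have h_parity := h.card_tangents_modEq_card_pointsIn hR hRX hRW
  rw [h_empty, hW_card, card_empty, Nat.ModEq] at h_parity
  rw [Nat.even_iff]
  omega

lemma IsCap.exists_external_line_of_hyperoval (h : IsCap X) (hW : finrank F W = 3)
    (hW_card : #(pointsIn X W) = q + 2) :
    ∃ L ≤ W, finrank F L = 2 ∧ #(pointsIn X L) = 0 := by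
  obtain ⟨R, hRW, hR, hRX⟩ := h.exists_point_notMem_of_hyperoval hW_card
  have h_sum : ∑ L ∈ pencil R W, #(pointsIn X L) < ∑ L ∈ pencil R W, 2 := by
    rw [sum_card_pointsIn_pencil_of_notMem h.finrank_eq_one hR hRX hRW, hW_card, sum_const,
      card_pencil_of_finrank_add_two hRW (by rw [hW, hR]), smul_eq_mul]
    have := Finite.one_lt_card (α := F)
    omega
  obtain ⟨L, hL, hL_lt⟩ := exists_lt_of_sum_lt h_sum
  obtain ⟨-, hLW, hL⟩ := mem_pencil.mp hL
  rw [hR] at hL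
  have := h.card_pointsIn_eq_zero_or_two hW hW_card hL hLW
  exact ⟨L, hLW, hL, by omega⟩

end Cap

/-! ### Nuclei of oval plane sections -/

section Nucleus

variable [Finite V] {X : Finset (Submodule F V)} {B L N P R W g x : Submodule F V}

/-- The points of the whole space off `X` that lie on no secant of `X`. -/
noncomputable def nuclei (X : Finset (Submodule F V)) : Finset (Submodule F V) :=
  {N : Submodule F V | IsNucleus X ⊤ N}.toFinite.toFinset

@[simp]
lemma mem_nuclei : N ∈ nuclei X ↔ IsNucleus X ⊤ N := by
  simp [nuclei]

lemma IsNucleus.sup_mem_tangents (hN : IsNucleus X W N) (h : IsCap X) (hx : x ∈ X) (hxW : x ≤ W) :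
    N ⊔ x ∈ tangents X x W := by
  have h_line := finrank_sup_eq_two hN.finrank_eq_one (h.finrank_eq_one x hx)
    (ne_of_mem_of_not_mem hx hN.notMem).symm
  have h_le := sup_le hN.le hxW
  have h_le_one := hN.card_pointsIn_le_one _ h_le h_line le_sup_left
  have h_ge_one := one_le_card_pointsIn hx (le_sup_right : x ≤ N ⊔ x)
  exact mem_tangents.mpr ⟨le_sup_right, h_le, h_line, by omega⟩

open Classical in
lemma IsCap.image_sup_nuclei_subset (h : IsCap X) (hx : x ∈ X) :
    (nuclei X).image (· ⊔ x) ⊆ tangents X x ⊤ :=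
  image_subset_iff.mpr fun _ hN ↦ (mem_nuclei.mp hN).sup_mem_tangents h hx le_top

lemma sum_card_tangents {S : Finset (Submodule F V)}
    (hS : ∀ L ∈ tangents X ⊥ W, #(pointsIn S L) = 1) :
    ∑ R ∈ S, #(tangents X R W) = #(tangents X ⊥ W) := by
  classical
  have h_above : ∀ R ∈ S,
      #((tangents X ⊥ W).bipartiteAbove (· ≤ ·) R) = #(tangents X R W) := by
    intro R _
    congr 1
    ext L
    simp only [mem_bipartiteAbove, mem_tangents, bot_le, true_and, and_comm]
  have h_below : ∀ L ∈ tangents X ⊥ W, #(S.bipartiteBelow (· ≤ ·) L) = 1 := hS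
  rw [← sum_congr rfl h_above, sum_card_bipartiteAbove_eq_sum_card_bipartiteBelow,
    sum_congr rfl h_below, card_eq_sum_ones]

lemma sum_card_tangents_pointsIn :
    ∑ x ∈ pointsIn X W, #(tangents X x W) = #(tangents X ⊥ W) := by
  refine sum_card_tangents fun L hL ↦ ?_
  obtain ⟨-, hLW, -, hL_one⟩ := mem_tangents.mp hL
  rw [← hL_one]
  congr 1
  ext x
  simp only [mem_pointsIn]
  exact ⟨fun hx ↦ ⟨hx.1.1, hx.2⟩, fun hx ↦ ⟨⟨hx.1, hx.2.trans hLW⟩, hx.2⟩⟩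

lemma sum_card_tangents_pencil_bot (hB : finrank F B = 3) (hg : finrank F g = 2) (hgB : g ≤ B)
    (hg_card : #(pointsIn X g) ≠ 1) :
    ∑ R ∈ pencil ⊥ g, #(tangents X R B) = #(tangents X ⊥ B) := by
  refine sum_card_tangents fun L hL ↦ card_eq_one.mpr ⟨L ⊓ g, ?_⟩
  obtain ⟨-, hLB, hL, hL_one⟩ := mem_tangents.mp hL
  have hLg : L ≠ g := fun h ↦ hg_card (h ▸ hL_one)
  have h_meet : finrank F ↥(L ⊓ g) = 1 := finrank_inf_of_ne hLB hgB hLg hL hg hB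
  ext R
  simp only [mem_pointsIn, mem_pencil, mem_singleton, bot_le, true_and, finrank_bot, zero_add]
  constructor
  · rintro ⟨⟨hRg, hR⟩, hRL⟩
    exact eq_of_le_of_finrank_eq_one hR h_meet (le_inf hRL hRg)
  · rintro rfl
    exact ⟨⟨inf_le_right, h_meet⟩, inf_le_left⟩

variable [Finite F]

lemma IsCap.card_tangents_oval (h : IsCap X) (hB : finrank F B = 3)
    (hB_card : #(pointsIn X B) = q + 1) (hx : x ∈ X) (hxB : x ≤ B) : #(tangents X x B) = 1 := by
  have := h.card_tangents_add_card_pointsIn_plane hB hx hxB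
  omega

lemma IsCap.one_le_card_tangents_oval (h : IsCap X) (hq : Even q) (hB : finrank F B = 3)
    (hB_card : #(pointsIn X B) = q + 1) (hR : finrank F R = 1) (hRB : R ≤ B) :
    1 ≤ #(tangents X R B) := by
  by_cases hRX : R ∈ X
  · exact (h.card_tangents_oval hB hB_card hRX hRB).ge
  · have h_parity := h.card_tangents_modEq_card_pointsIn hR hRX hRB
    rw [hB_card, Nat.ModEq] at h_parity
    rw [Nat.even_iff] at hq
    omega

-- There are `q + 1` tangents in all, and each of the `q + 1` points of `g` is on at least one.
lemma IsCap.card_tangents_secant (h : IsCap X) (hq : Even q) (hB : finrank F B = 3)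
    (hB_card : #(pointsIn X B) = q + 1) (hg : finrank F g = 2) (hgB : g ≤ B)
    (hg_card : #(pointsIn X g) ≠ 1) (hR : finrank F R = 1) (hRg : R ≤ g) :
    #(tangents X R B) = 1 := by
  have h_ge : ∀ R ∈ pencil ⊥ g, 1 ≤ #(tangents X R B) := fun R hR ↦ by
    obtain ⟨-, hRg, hR⟩ := mem_pencil.mp hR
    exact h.one_le_card_tangents_oval hq hB hB_card (by simpa using hR) (hRg.trans hgB)
  have h_total : ∑ R ∈ pencil ⊥ g, 1 = ∑ R ∈ pencil ⊥ g, #(tangents X R B) := by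
    have h_one : ∀ x ∈ pointsIn X B, #(tangents X x B) = 1 := fun x hx ↦
      h.card_tangents_oval hB hB_card (mem_pointsIn.mp hx).1 (mem_pointsIn.mp hx).2
    rw [sum_card_tangents_pencil_bot hB hg hgB hg_card, ← sum_card_tangents_pointsIn,
      sum_congr rfl h_one, ← card_eq_sum_ones, ← card_eq_sum_ones, hB_card,
      card_pencil_of_finrank_add_two bot_le (by simp [hg])]
  exact ((sum_eq_sum_iff_of_le h_ge).mp h_total R (by simp [hR, hRg])).symm

lemma IsCap.exists_isNucleus_oval (h : IsCap X) (hq : Even q) (hB : finrank F B = 3)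
    (hB_card : #(pointsIn X B) = q + 1) (hL : finrank F L = 2) (hL_one : #(pointsIn X L) = 1)
    (hLB : L ≤ B) : ∃ N ≤ L, IsNucleus X B N := by
  obtain ⟨P, hP, hPL⟩ := exists_mem_le_of_card_pointsIn_pos (by omega : 0 < #(pointsIn X L))
  obtain ⟨x, hx, hxB, hxP⟩ : ∃ x ∈ X, x ≤ B ∧ x ≠ P :=
    exists_mem_le_ne (by have := Finite.one_lt_card (α := F); omega) P
  obtain ⟨T, hT⟩ : (tangents X x B).Nonempty :=
    card_pos.mp (by rw [h.card_tangents_oval hB hB_card hx hxB]; exact one_pos)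
  obtain ⟨hxT, hTB, hT, hT_one⟩ := mem_tangents.mp hT
  have hLT : L ≠ T := by
    rintro rfl
    exact hxP (eq_of_card_pointsIn_le_one hL_one.le hx hxT hP hPL)
  have hN : finrank F ↥(L ⊓ T) = 1 := finrank_inf_of_ne hLB hTB hLT hL hT hB
  refine ⟨L ⊓ T, inf_le_left, hN, fun hNX ↦ hxP ?_, inf_le_left.trans hLB, ?_⟩
  · calc x = L ⊓ T := eq_of_card_pointsIn_le_one hT_one.le hx hxT hNX inf_le_right
      _ = P := eq_of_card_pointsIn_le_one hL_one.le hNX inf_le_left hP hPL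
  · intro g hgB hg hNg
    by_contra! hg_card
    have h_unique := h.card_tangents_secant hq hB hB_card hg hgB (by omega) hN hNg
    exact hLT (card_le_one.mp h_unique.le L (by simp [hLB, hL, hL_one]) T
      (by simp [hTB, hT, hT_one]))

lemma IsNucleus.card_pointsIn_eq_one (hN : IsNucleus X B N) (h : IsCap X) (hB : finrank F B = 3)
    (hB_card : #(pointsIn X B) = q + 1) (hL : finrank F L = 2) (hLB : L ≤ B) (hNL : N ≤ L) :
    #(pointsIn X L) = 1 := by
  have h_le : ∀ L ∈ pencil N B, #(pointsIn X L) ≤ 1 := fun L hL ↦ by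
    obtain ⟨hNL, hLB, hL⟩ := mem_pencil.mp hL
    exact hN.card_pointsIn_le_one L hLB (by rw [hL, hN.finrank_eq_one]) hNL
  have h_total : ∑ L ∈ pencil N B, #(pointsIn X L) = ∑ L ∈ pencil N B, 1 := by
    rw [sum_card_pointsIn_pencil_of_notMem h.finrank_eq_one hN.finrank_eq_one hN.notMem hN.le,
      hB_card, ← card_eq_sum_ones,
      card_pencil_of_finrank_add_two hN.le (by rw [hB, hN.finrank_eq_one])]
  exact (sum_eq_sum_iff_of_le h_le).mp h_total L (by simp [hNL, hLB, hL, hN.finrank_eq_one])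

end Nucleus

/-! ### Ovoids of projective 3-space -/

/-- An ovoid of `PG(3, q)`: a cap of `q ^ 2 + 1` points in the projective space of a
four-dimensional `V`. -/
structure IsOvoid (X : Finset (Submodule F V)) : Prop extends IsCap X where
  finrank_eq_four : finrank F V = 4
  card_eq : #X = q ^ 2 + 1

section Ovoid

variable [Finite V] {X : Finset (Submodule F V)} {B H L M N P W g x y : Submodule F V}

lemma IsOvoid.finrank_inf_plane (h : IsOvoid X) (hW : finrank F W = 3) (hB : finrank F B = 3)
    (hWB : W ≠ B) : finrank F ↥(W ⊓ B) = 2 :=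
  finrank_inf_of_ne le_top le_top hWB hW hB
    (by rw [finrank_top, h.finrank_eq_four])

variable [Finite F]

lemma IsOvoid.card_pencil_line (h : IsOvoid X) (hL : finrank F L = 2) : #(pencil L ⊤) = q + 1 :=
  card_pencil_of_finrank_add_two le_top (by rw [finrank_top, h.finrank_eq_four, hL])

lemma IsOvoid.card_pencil_point (h : IsOvoid X) (hP : finrank F P = 1) :
    #(pencil P ⊤) = q ^ 2 + q + 1 :=
  card_pencil_of_finrank_add_three le_top (by rw [finrank_top, h.finrank_eq_four, hP])

lemma IsOvoid.sum_card_pointsIn_pencil_line (h : IsOvoid X) (hL : finrank F L = 2) :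
    ∑ W ∈ pencil L ⊤, #(pointsIn X W) = q ^ 2 + 1 + q * #(pointsIn X L) := by
  have h_sum := sum_card_pointsIn_pencil h.finrank_eq_one (le_top : L ≤ ⊤)
  rw [pointsIn_top, h.card_eq, h.card_pencil_line hL] at h_sum
  linarith

lemma IsOvoid.card_tangents (h : IsOvoid X) (hx : x ∈ X) : #(tangents X x ⊤) = q + 1 := by
  have h_count := h.card_tangents_add_card_pointsIn hx le_top
  rw [pointsIn_top, h.card_eq, h.card_pencil_point (h.finrank_eq_one x hx)] at h_count
  omega

lemma IsOvoid.card_pointsIn_eq_of_secant (h : IsOvoid X) (hg : finrank F g = 2)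
    (hg_two : #(pointsIn X g) = 2)
    (h_le : ∀ W : Submodule F V, finrank F W = 3 → g ≤ W → #(pointsIn X W) ≤ q + 1)
    (hW : finrank F W = 3) (hgW : g ≤ W) : #(pointsIn X W) = q + 1 := by
  have h_le' : ∀ W ∈ pencil g ⊤, #(pointsIn X W) ≤ q + 1 := fun _ hW ↦ by
    obtain ⟨hgW, -, hW⟩ := mem_pencil.mp hW
    exact h_le _ (by rw [hW, hg]) hgW
  have h_total : ∑ W ∈ pencil g ⊤, #(pointsIn X W) = ∑ W ∈ pencil g ⊤, (q + 1) := by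
    rw [h.sum_card_pointsIn_pencil_line hg, hg_two, sum_const, h.card_pencil_line hg, smul_eq_mul]
    ring
  exact (sum_eq_sum_iff_of_le h_le').mp h_total W (by simp [hgW, hW, hg])

lemma IsOvoid.exists_oval_of_tangent (h : IsOvoid X) (hL : finrank F L = 2)
    (hL_one : #(pointsIn X L) = 1) :
    ∃ B : Submodule F V, finrank F B = 3 ∧ L ≤ B ∧ #(pointsIn X B) = q + 1 := by
  have h_total : ∑ _ ∈ pencil L ⊤, q < ∑ W ∈ pencil L ⊤, #(pointsIn X W) := by
    rw [h.sum_card_pointsIn_pencil_line hL, hL_one, sum_const, h.card_pencil_line hL, smul_eq_mul]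
    linarith
  obtain ⟨B, hB, hB_lt⟩ := exists_lt_of_sum_lt h_total
  obtain ⟨hLB, -, hB⟩ := mem_pencil.mp hB
  rw [hL] at hB
  have := h.card_pointsIn_plane_le_of_tangent hB hL hL_one hLB
  exact ⟨B, hB, hLB, by omega⟩

/-! ### Planes and tangents through the nucleus of an oval section -/

lemma IsOvoid.card_pointsIn_inf_eq_one (h : IsOvoid X) (hB : finrank F B = 3)
    (hB_card : #(pointsIn X B) = q + 1) (hN : IsNucleus X B N) (hW : finrank F W = 3)
    (hWB : W ≠ B) (hNW : N ≤ W) : #(pointsIn X (W ⊓ B)) = 1 :=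
  hN.card_pointsIn_eq_one h.toIsCap hB hB_card (h.finrank_inf_plane hW hB hWB) inf_le_right
    (le_inf hNW hN.le)

lemma IsOvoid.card_pointsIn_le_of_isNucleus (h : IsOvoid X) (hB : finrank F B = 3)
    (hB_card : #(pointsIn X B) = q + 1) (hN : IsNucleus X B N) (hW : finrank F W = 3)
    (hNW : N ≤ W) : #(pointsIn X W) ≤ q + 1 := by
  by_cases hWB : W = B
  · rw [hWB, hB_card]
  · exact h.card_pointsIn_plane_le_of_tangent hW (h.finrank_inf_plane hW hB hWB)
      (h.card_pointsIn_inf_eq_one hB hB_card hN hW hWB hNW) inf_le_left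

lemma IsOvoid.card_pointsIn_eq_of_secant_of_isNucleus (h : IsOvoid X) (hB : finrank F B = 3)
    (hB_card : #(pointsIn X B) = q + 1) (hN : IsNucleus X B N) (hg : finrank F g = 2)
    (hg_two : #(pointsIn X g) = 2) (hNg : N ≤ g) (hW : finrank F W = 3) (hgW : g ≤ W) :
    #(pointsIn X W) = q + 1 :=
  h.card_pointsIn_eq_of_secant hg hg_two
    (fun _ hW hgW ↦ h.card_pointsIn_le_of_isNucleus hB hB_card hN hW (hNg.trans hgW)) hW hgW

-- If `y` were off `B`, then in the oval plane `g ⊔ y` the point `N` of the secant `g` would be on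
-- two tangents: `N ⊔ y` and the intersection with `B`.
lemma IsOvoid.le_of_card_pointsIn_sup_eq_one (h : IsOvoid X) (hq : Even q) (hB : finrank F B = 3)
    (hB_card : #(pointsIn X B) = q + 1) (hN : IsNucleus X B N) (hg : finrank F g = 2)
    (hg_two : #(pointsIn X g) = 2) (hNg : N ≤ g) (hy : y ∈ X)
    (hy_one : #(pointsIn X (N ⊔ y)) = 1) : y ≤ B := by
  by_contra hyB
  have hy_point := h.finrank_eq_one y hy
  have hNy : N ≠ y := (ne_of_mem_of_not_mem hy hN.notMem).symm
  have hyg : ¬ y ≤ g := fun hyg ↦ by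
    rw [sup_eq_of_finrank_eq_two hN.finrank_eq_one hy_point hNy hg hNg hyg] at hy_one
    omega
  have hW : finrank F ↥(g ⊔ y) = 3 := by rw [finrank_sup_of_not_le hy_point hyg, hg]
  have hNW : N ≤ g ⊔ y := hNg.trans le_sup_left
  have hWB : g ⊔ y ≠ B := fun hWB ↦ hyB (hWB ▸ le_sup_right)
  have hW_card := h.card_pointsIn_eq_of_secant_of_isNucleus hB hB_card hN hg hg_two hNg hW
    le_sup_left
  have h_unique : #(tangents X N (g ⊔ y)) = 1 :=
    h.card_tangents_secant hq hW hW_card hg le_sup_left (by omega) hN.finrank_eq_one hNg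
  have h_sup : N ⊔ y ∈ tangents X N (g ⊔ y) := mem_tangents.mpr
    ⟨le_sup_left, sup_le hNW le_sup_right, finrank_sup_eq_two hN.finrank_eq_one hy_point hNy,
      hy_one⟩
  have h_inf : (g ⊔ y) ⊓ B ∈ tangents X N (g ⊔ y) := mem_tangents.mpr
    ⟨le_inf hNW hN.le, inf_le_left, h.finrank_inf_plane hW hB hWB,
      h.card_pointsIn_inf_eq_one hB hB_card hN hW hWB hNW⟩
  have h_eq : N ⊔ y = (g ⊔ y) ⊓ B := card_le_one.mp h_unique.le _ h_sup _ h_inf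
  exact hyB (le_sup_right.trans (h_eq.trans_le inf_le_right))

-- A second point `y` of `W ⊓ H` is off `B`, so that `N ⊔ y` is a secant through `N` in `W`.
lemma IsOvoid.card_pointsIn_eq_of_sup_le (h : IsOvoid X) (hH : finrank F H = 3)
    (hH_card : #(pointsIn X H) = q + 2) (hP : P ∈ X) (hPH : P ≤ H) (hB : finrank F B = 3)
    (hB_card : #(pointsIn X B) = q + 1) (hN : IsNucleus X B N) (hPB : P ≤ B)
    (hg : finrank F g = 2) (hg_two : #(pointsIn X g) = 2) (hNg : N ≤ g) (hW : finrank F W = 3)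
    (hNPW : N ⊔ P ≤ W) : #(pointsIn X W) = q + 1 := by
  obtain rfl | hWB := eq_or_ne W B
  · exact hB_card
  obtain ⟨hNW, hPW⟩ := sup_le_iff.mp hNPW
  have hq := h.even_card_of_hyperoval hH hH_card
  have hWH : W ≠ H := by
    rintro rfl
    have := h.card_pointsIn_le_of_isNucleus hB hB_card hN hW hNW
    omega
  have h_two := h.card_pointsIn_eq_zero_or_two hH hH_card (h.finrank_inf_plane hW hH hWH)
    inf_le_right
  have h_pos := one_le_card_pointsIn hP (le_inf hPW hPH)
  obtain ⟨y, hy, hyWH, hyP⟩ := exists_mem_le_ne (by omega : 2 ≤ #(pointsIn X (W ⊓ H))) P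
  have hyW := hyWH.trans inf_le_left
  have hyB : ¬ y ≤ B := fun hyB ↦ hyP <| eq_of_card_pointsIn_le_one
    (h.card_pointsIn_inf_eq_one hB hB_card hN hW hWB hNW).le hy (le_inf hyW hyB) hP
    (le_inf hPW hPB)
  have hNy : finrank F ↥(N ⊔ y) = 2 := finrank_sup_eq_two hN.finrank_eq_one
    (h.finrank_eq_one y hy) (ne_of_mem_of_not_mem hy hN.notMem).symm
  have hNy_two : #(pointsIn X (N ⊔ y)) = 2 := by
    have h_le := h.card_pointsIn_le_two _ hNy
    have h_ge := one_le_card_pointsIn hy (le_sup_right : y ≤ N ⊔ y)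
    have h_ne := mt (h.le_of_card_pointsIn_sup_eq_one hq hB hB_card hN hg hg_two hNg hy) hyB
    omega
  exact h.card_pointsIn_eq_of_secant_of_isNucleus hB hB_card hN hNy hNy_two le_sup_left hW
    (sup_le hNW hyW)

lemma IsOvoid.isNucleus_top_of_hyperoval (h : IsOvoid X) (hH : finrank F H = 3)
    (hH_card : #(pointsIn X H) = q + 2) (hP : P ∈ X) (hPH : P ≤ H) (hB : finrank F B = 3)
    (hB_card : #(pointsIn X B) = q + 1) (hN : IsNucleus X B N) (hPB : P ≤ B) :
    IsNucleus X ⊤ N := by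
  refine ⟨hN.finrank_eq_one, hN.notMem, le_top, fun g _ hg hNg ↦ ?_⟩
  by_contra! hg_card
  have hg_two : #(pointsIn X g) = 2 := (h.card_pointsIn_le_two g hg).antisymm hg_card
  obtain ⟨-, -, hNP, hNP_one⟩ := mem_tangents.mp (hN.sup_mem_tangents h.toIsCap hP hPB)
  have h_all : ∀ W ∈ pencil (N ⊔ P) ⊤, #(pointsIn X W) = q + 1 := fun W hW ↦ by
    obtain ⟨hNPW, -, hW⟩ := mem_pencil.mp hW
    exact h.card_pointsIn_eq_of_sup_le hH hH_card hP hPH hB hB_card hN hPB hg hg_two hNg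
      (by rw [hW, hNP]) hNPW
  have h_sum := h.sum_card_pointsIn_pencil_line hNP
  rw [sum_congr rfl h_all, sum_const, h.card_pencil_line hNP, smul_eq_mul, hNP_one] at h_sum
  have := Finite.one_lt_card (α := F)
  linarith

lemma IsOvoid.exists_isNucleus_top_of_hyperoval (h : IsOvoid X) (hH : finrank F H = 3)
    (hH_card : #(pointsIn X H) = q + 2) (hP : P ∈ X) (hPH : P ≤ H)
    (hL : L ∈ tangents X P ⊤) : ∃ N ≤ L, IsNucleus X ⊤ N := by
  obtain ⟨hPL, -, hL, hL_one⟩ := mem_tangents.mp hL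
  obtain ⟨_, hB, hLB, hB_card⟩ := h.exists_oval_of_tangent hL hL_one
  obtain ⟨N, hNL, hN⟩ := h.exists_isNucleus_oval (h.even_card_of_hyperoval hH hH_card) hB hB_card
    hL hL_one hLB
  exact ⟨N, hNL, h.isNucleus_top_of_hyperoval hH hH_card hP hPH hB hB_card hN (hPL.trans hLB)⟩

/-! ### Nuclei of an ovoid -/

lemma IsOvoid.eq_of_isNucleus_top (h : IsOvoid X) (hN : IsNucleus X ⊤ N) (hM : IsNucleus X ⊤ M)
    (hL : finrank F L = 2) (hL_one : #(pointsIn X L) = 1) (hNL : N ≤ L) (hML : M ≤ L) : N = M := by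
  obtain ⟨B, hB, hLB, hB_card⟩ := h.exists_oval_of_tangent hL hL_one
  obtain ⟨P, hP, hPL⟩ := exists_mem_le_of_card_pointsIn_pos (by omega : 0 < #(pointsIn X L))
  obtain ⟨x, hx, hxB, hxP⟩ : ∃ x ∈ X, x ≤ B ∧ x ≠ P :=
    exists_mem_le_ne (by have := Finite.one_lt_card (α := F); omega) P
  have h_unique := h.card_tangents_oval hB hB_card hx hxB
  have h_tangentN := (hN.mono le_top (hNL.trans hLB)).sup_mem_tangents h.toIsCap hx hxB
  have h_tangentM := (hM.mono le_top (hML.trans hLB)).sup_mem_tangents h.toIsCap hx hxB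
  have h_eq : N ⊔ x = M ⊔ x := card_le_one.mp h_unique.le _ h_tangentN _ h_tangentM
  by_contra hNM
  have h_line : N ⊔ x = L := calc
    N ⊔ x = N ⊔ M := (sup_eq_of_finrank_eq_two hN.finrank_eq_one hM.finrank_eq_one hNM
        (mem_tangents.mp h_tangentN).2.2.1 le_sup_left (h_eq ▸ le_sup_left)).symm
    _ = L := sup_eq_of_finrank_eq_two hN.finrank_eq_one hM.finrank_eq_one hNM hL hNL hML
  exact hxP (eq_of_card_pointsIn_le_one hL_one.le hx (le_sup_right.trans h_line.le) hP hPL)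

lemma IsOvoid.injOn_sup_nuclei (h : IsOvoid X) (hx : x ∈ X) :
    Set.InjOn (· ⊔ x) (nuclei X : Set (Submodule F V)) := by
  intro N hN M hM (h_eq : N ⊔ x = M ⊔ x)
  rw [mem_coe, mem_nuclei] at hN hM
  obtain ⟨-, -, h_line, h_one⟩ := mem_tangents.mp (hN.sup_mem_tangents h.toIsCap hx le_top)
  exact h.eq_of_isNucleus_top hN hM h_line h_one le_sup_left (h_eq ▸ le_sup_left)

lemma IsOvoid.card_nuclei_of_hyperoval (h : IsOvoid X) (hH : finrank F H = 3)
    (hH_card : #(pointsIn X H) = q + 2) : #(nuclei X) = q + 1 := by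
  classical
  obtain ⟨P, hP, hPH⟩ := exists_mem_le_of_card_pointsIn_pos (by omega : 0 < #(pointsIn X H))
  have h_surj : tangents X P ⊤ ⊆ (nuclei X).image (· ⊔ P) := fun L hL ↦ by
    obtain ⟨N, hNL, hN⟩ := h.exists_isNucleus_top_of_hyperoval hH hH_card hP hPH hL
    obtain ⟨hPL, -, hL, -⟩ := mem_tangents.mp hL
    exact mem_image.mpr ⟨N, mem_nuclei.mpr hN, sup_eq_of_finrank_eq_two hN.finrank_eq_one
      (h.finrank_eq_one P hP) (ne_of_mem_of_not_mem hP hN.notMem).symm hL hNL hPL⟩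
  rw [← card_image_of_injOn (h.injOn_sup_nuclei hP),
    (h.image_sup_nuclei_subset hP).antisymm h_surj, h.card_tangents hP]

lemma IsOvoid.card_pointsIn_nuclei (h : IsOvoid X) (h_nuclei : #(nuclei X) = q + 1) (hx : x ∈ X)
    (hxW : x ≤ W) : #(pointsIn (nuclei X) W) = #(tangents X x W) := by
  classical
  have h_image : (nuclei X).image (· ⊔ x) = tangents X x ⊤ := by
    refine eq_of_subset_of_card_le (h.image_sup_nuclei_subset hx) ?_
    rw [card_image_of_injOn (h.injOn_sup_nuclei hx), h_nuclei, h.card_tangents hx]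
  rw [← card_image_of_injOn ((h.injOn_sup_nuclei hx).mono fun N hN ↦ (mem_pointsIn.mp hN).1)]
  congr 1
  ext L
  have h_mem := Finset.ext_iff.mp h_image L
  simp only [mem_image, mem_tangents, le_top, true_and] at h_mem
  simp only [mem_image, mem_tangents, mem_pointsIn]
  constructor
  · rintro ⟨N, ⟨hN, hNW⟩, rfl⟩
    obtain ⟨h_le, h_tangent⟩ := h_mem.mp ⟨N, hN, rfl⟩
    exact ⟨h_le, sup_le hNW hxW, h_tangent⟩
  · rintro ⟨hxL, hLW, hL⟩
    obtain ⟨N, hN, rfl⟩ := h_mem.mpr ⟨hxL, hL⟩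
    exact ⟨N, ⟨hN, le_sup_left.trans hLW⟩, rfl⟩

-- Otherwise only `q ^ 2` of the `q ^ 2 + q + 1` lines through `N` could meet `X`, each in at most
-- one point.
lemma IsOvoid.card_pointsIn_pos_of_isNucleus_top (h : IsOvoid X) (hN : IsNucleus X ⊤ N)
    (hW : finrank F W = 3) (hNW : N ≤ W) : 0 < #(pointsIn X W) := by
  classical
  by_contra! hW_zero
  have h_sub : pencil N W ⊆ pencil N ⊤ := fun L hL ↦ by
    obtain ⟨hNL, -, hL⟩ := mem_pencil.mp hL
    exact mem_pencil.mpr ⟨hNL, le_top, hL⟩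
  have h_external : ∑ L ∈ pencil N W, #(pointsIn X L) = 0 := by
    rw [sum_card_pointsIn_pencil_of_notMem h.finrank_eq_one hN.finrank_eq_one hN.notMem hNW]
    omega
  have h_le : ∑ L ∈ pencil N ⊤ \ pencil N W, #(pointsIn X L) ≤ q ^ 2 := calc
    _ ≤ #(pencil N ⊤ \ pencil N W) • 1 := sum_le_card_nsmul _ _ _ fun L hL ↦ by
        obtain ⟨hNL, hL_le, hL⟩ := mem_pencil.mp (mem_sdiff.mp hL).1
        exact hN.card_pointsIn_le_one L hL_le (by rw [hL, hN.finrank_eq_one]) hNL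
    _ = q ^ 2 := by
        rw [smul_eq_mul, mul_one, card_sdiff_of_subset h_sub, h.card_pencil_point hN.finrank_eq_one,
          card_pencil_of_finrank_add_two hNW (by rw [hW, hN.finrank_eq_one]), add_assoc,
          Nat.add_sub_cancel]
  have h_total := sum_sdiff (f := fun L ↦ #(pointsIn X L)) h_sub
  rw [h_external, sum_card_pointsIn_pencil_of_notMem h.finrank_eq_one hN.finrank_eq_one hN.notMem
    le_top, pointsIn_top, h.card_eq] at h_total
  omega

lemma IsOvoid.card_pointsIn_add_card_pointsIn_nuclei (h : IsOvoid X)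
    (h_nuclei : #(nuclei X) = q + 1) (hW : finrank F W = 3) (hx : x ∈ X) (hxW : x ≤ W) :
    #(pointsIn X W) + #(pointsIn (nuclei X) W) = q + 2 := by
  rw [h.card_pointsIn_nuclei h_nuclei hx hxW, add_comm,
    h.card_tangents_add_card_pointsIn_plane hW hx hxW]

lemma IsOvoid.dvd_card_pointsIn_add_card_pointsIn_nuclei (h : IsOvoid X)
    (h_nuclei : #(nuclei X) = q + 1) (hW : finrank F W = 3) :
    q + 2 ∣ #(pointsIn X W) + #(pointsIn (nuclei X) W) := by
  obtain hX_zero | hX_pos := Nat.eq_zero_or_pos #(pointsIn X W)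
  · have h_empty : pointsIn (nuclei X) W = ∅ := eq_empty_of_forall_notMem fun N hN ↦ by
      obtain ⟨hN, hNW⟩ := mem_pointsIn.mp hN
      exact (h.card_pointsIn_pos_of_isNucleus_top (mem_nuclei.mp hN) hW hNW).ne' hX_zero
    simp [hX_zero, h_empty]
  · obtain ⟨x, hx, hxW⟩ := exists_mem_le_of_card_pointsIn_pos hX_pos
    rw [h.card_pointsIn_add_card_pointsIn_nuclei h_nuclei hW hx hxW]

/-! ### Plane sections of ovoids -/

-- The ovoid and its nuclei together meet each plane through an external line in a multiple of
-- `q + 2` points, but have `q ^ 2 + q + 2 = (q + 2) * (q - 1) + 4` points altogether.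
lemma IsOvoid.card_pointsIn_ne_of_two_lt (h : IsOvoid X) (hq : 2 < q) (hH : finrank F H = 3) :
    #(pointsIn X H) ≠ q + 2 := by
  intro hH_card
  have h_nuclei := h.card_nuclei_of_hyperoval hH hH_card
  obtain ⟨L, hLH, hL, hL_zero⟩ := h.exists_external_line_of_hyperoval hH hH_card
  obtain ⟨x, hx, hxH⟩ := exists_mem_le_of_card_pointsIn_pos (by omega : 0 < #(pointsIn X H))
  have hL_nuclei : #(pointsIn (nuclei X) L) = 0 := by
    have hH_total := h.card_pointsIn_add_card_pointsIn_nuclei h_nuclei hH hx hxH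
    have h_mono : #(pointsIn (nuclei X) L) ≤ #(pointsIn (nuclei X) H) := card_pointsIn_mono hLH
    omega
  have h_sum : ∑ W ∈ pencil L ⊤, (#(pointsIn X W) + #(pointsIn (nuclei X) W))
      = q ^ 2 + 1 + (q + 1) := by
    rw [sum_add_distrib, sum_card_pointsIn_pencil_of_card_eq_zero h.finrank_eq_one le_top hL_zero,
      sum_card_pointsIn_pencil_of_card_eq_zero (fun N hN ↦ (mem_nuclei.mp hN).finrank_eq_one)
        le_top hL_nuclei, pointsIn_top, pointsIn_top, h.card_eq, h_nuclei]
  have h_dvd : q + 2 ∣ q ^ 2 + 1 + (q + 1) := by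
    rw [← h_sum]
    refine dvd_sum fun W hW ↦ h.dvd_card_pointsIn_add_card_pointsIn_nuclei h_nuclei ?_
    rw [(mem_pencil.mp hW).2.2, hL]
  have h_four : q + 2 ∣ 4 := by
    obtain ⟨r, hr⟩ : ∃ r, q = r + 1 := ⟨q - 1, by omega⟩
    rw [show q ^ 2 + 1 + (q + 1) = (q + 2) * r + 4 by rw [hr]; ring] at h_dvd
    exact (Nat.dvd_add_right (dvd_mul_right _ _)).mp h_dvd
  have := Nat.le_of_dvd (by norm_num) h_four
  omega

lemma IsOvoid.card_pointsIn_plane_of_two_le (h : IsOvoid X) (hq : 2 < q) (hW : finrank F W = 3)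
    (hW_card : 2 ≤ #(pointsIn X W)) : #(pointsIn X W) = q + 1 := by
  obtain ⟨x, hx, hxW⟩ := exists_mem_le_of_card_pointsIn_pos (by omega : 0 < #(pointsIn X W))
  obtain ⟨y, hy, hyW, hyx⟩ := exists_mem_le_ne hW_card x
  have hg := finrank_sup_eq_two (h.finrank_eq_one x hx) (h.finrank_eq_one y hy) hyx.symm
  have hg_two : #(pointsIn X (x ⊔ y)) = 2 := (h.card_pointsIn_le_two _ hg).antisymm
    (two_le_card_pointsIn hx hy hyx.symm le_sup_left le_sup_right)
  refine h.card_pointsIn_eq_of_secant hg hg_two (fun H hH _ ↦ ?_) hW (sup_le hxW hyW)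
  have h_le := h.card_pointsIn_plane_le hH
  have h_ne := h.card_pointsIn_ne_of_two_lt hq hH
  omega

-- Modulo `q`, the `q ^ 2 + 1` points are counted by the number of planes through a line of `W`
-- that meet `X`; if `W` is not one of them there is only one such plane.
lemma IsOvoid.card_pointsIn_plane_pos (h : IsOvoid X) (hq : 2 < q) (hW : finrank F W = 3) :
    0 < #(pointsIn X W) := by
  by_contra! hW_zero
  obtain ⟨L, hLW, hL⟩ := exists_le_finrank_eq (by omega : 2 ≤ finrank F W)
  have hL_zero : #(pointsIn X L) = 0 := by
    have := card_pointsIn_mono (X := X) hLW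
    omega
  have h_total : ∑ H ∈ pencil L ⊤, #(pointsIn X H) = q ^ 2 + 1 := by
    rw [h.sum_card_pointsIn_pencil_line hL, hL_zero, mul_zero, add_zero]
  have h_plane : ∀ H ∈ pencil L ⊤, #(pointsIn X H) = 0 ∨ #(pointsIn X H) = 1 ∨
      #(pointsIn X H) = q + 1 := fun H hH ↦ by
    have := h.card_pointsIn_plane_of_two_le (W := H) hq (by rw [(mem_pencil.mp hH).2.2, hL])
    omega
  let meeting : Finset (Submodule F V) := {H ∈ pencil L ⊤ | #(pointsIn X H) ≠ 0}
  have h_mod : 1 ≡ #meeting [MOD q] := calc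
    1 ≡ q ^ 2 + 1 [MOD q] := by simp [Nat.ModEq, sq]
    _ = ∑ H ∈ pencil L ⊤, #(pointsIn X H) := h_total.symm
    _ ≡ #meeting [MOD q] := by
      rw [card_filter]
      refine Nat.ModEq.sum fun H hH ↦ ?_
      obtain h_card | h_card | h_card := h_plane H hH <;> simp [h_card, Nat.ModEq]
  have h_lt : #meeting < q + 1 := by
    rw [← h.card_pencil_line hL]
    exact card_lt_card (filter_ssubset.mpr ⟨W, by simp [hLW, hW, hL], by omega⟩)
  have h_one : #meeting ≤ 1 := by
    by_contra! h_gt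
    have := Nat.le_of_dvd (by omega) ((Nat.modEq_iff_dvd' h_gt.le).mp h_mod)
    omega
  have h_le : ∑ H ∈ meeting, #(pointsIn X H) ≤ #meeting • (q + 1) :=
    sum_le_card_nsmul _ _ _ fun H hH ↦ by
      have := h_plane H (mem_filter.mp hH).1
      omega
  rw [sum_filter_ne_zero, h_total, smul_eq_mul] at h_le
  nlinarith

theorem IsOvoid.card_pointsIn_plane (h : IsOvoid X) (hq : 2 < q) (hW : finrank F W = 3) :
    #(pointsIn X W) = 1 ∨ #(pointsIn X W) = q + 1 := by
  have h_pos := h.card_pointsIn_plane_pos hq hW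
  have h_two := h.card_pointsIn_plane_of_two_le hq hW
  omega

end Ovoid

/-! ### The code of a set of points -/

section Code

variable {ι : Type*} {v : ι → V}

/-- The encoder of the code defined by the vectors `v i`, as a function of the functional
`f = u · _` instead of the message `u`. -/
def evaluationMap (v : ι → V) : Dual F V →ₗ[F] ι → F :=
  LinearMap.pi fun i ↦ Dual.eval F V (v i)

lemma injective_span_singleton (hv : ∀ i j, i ≠ j → ∀ c : F, v j ≠ c • v i) :
    Function.Injective fun i ↦ F ∙ v i := by
  intro i j h_eq
  by_contra hij
  obtain ⟨c, hc⟩ := Submodule.mem_span_singleton.mp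
    (h_eq.ge (Submodule.mem_span_singleton_self (v j)))
  exact hv i j hij c hc.symm

variable [Fintype ι]

variable (F) in
/-- The set of points spanned by the vectors `v i`. -/
noncomputable def spannedPoints (v : ι → V) : Finset (Submodule F V) :=
  (Set.finite_range fun i ↦ F ∙ v i).toFinset

@[simp]
lemma mem_spannedPoints {x : Submodule F V} : x ∈ spannedPoints F v ↔ ∃ i, F ∙ v i = x := by
  simp [spannedPoints]

lemma card_spannedPoints (hv : Function.Injective fun i ↦ F ∙ v i) :
    #(spannedPoints F v) = Fintype.card ι := by
  classical
  rw [spannedPoints, Set.Finite.toFinset_range, card_image_of_injective _ hv, card_univ]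

lemma isCap_spannedPoints [FiniteDimensional F V] (hv : ∀ i, v i ≠ 0)
    (h_indep : ∀ i j k, i ≠ j → i ≠ k → j ≠ k → LinearIndependent F ![v i, v j, v k]) :
    IsCap (spannedPoints F v) where
  finrank_eq_one x hx := by
    obtain ⟨i, rfl⟩ := mem_spannedPoints.mp hx
    exact finrank_span_singleton (hv i)
  card_pointsIn_le_two L hL := by
    by_contra! h_card
    obtain ⟨x, y, z, hx, hy, hz, hxy, hxz, hyz⟩ := two_lt_card_iff.mp h_card
    simp only [mem_pointsIn, mem_spannedPoints] at hx hy hz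
    obtain ⟨⟨i, rfl⟩, hi⟩ := hx
    obtain ⟨⟨j, rfl⟩, hj⟩ := hy
    obtain ⟨⟨k, rfl⟩, hk⟩ := hz
    have h_ijk : LinearIndependent F ![v i, v j, v k] := h_indep i j k
      (ne_of_apply_ne (F ∙ v ·) hxy) (ne_of_apply_ne (F ∙ v ·) hxz) (ne_of_apply_ne (F ∙ v ·) hyz)
    rw [Submodule.span_singleton_le_iff_mem] at hi hj hk
    have h_span : Submodule.span F (Set.range ![v i, v j, v k]) ≤ L := by
      rw [Submodule.span_le]
      simp [Set.insert_subset_iff, hi, hj, hk]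
    have h_le := Submodule.finrank_mono h_span
    rw [finrank_span_eq_card h_ijk, Fintype.card_fin] at h_le
    omega

variable {f : Dual F V}

lemma hammingNorm_evaluationMap_add_card_pointsIn [DecidableEq F]
    (hv : Function.Injective fun i ↦ F ∙ v i) :
    hammingNorm (evaluationMap v f) + #(pointsIn (spannedPoints F v) f.ker)
      = #(spannedPoints F v) := by
  classical
  have h_zeros : pointsIn (spannedPoints F v) f.ker =
      image (fun i ↦ F ∙ v i) {i | f (v i) = 0} := by
    ext x
    simp only [mem_pointsIn, mem_spannedPoints, mem_image, mem_filter, mem_univ, true_and]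
    constructor
    · rintro ⟨⟨i, rfl⟩, hi⟩
      exact ⟨i, by simpa [Submodule.span_singleton_le_iff_mem] using hi, rfl⟩
    · rintro ⟨i, hi, rfl⟩
      exact ⟨⟨i, rfl⟩, by simpa [Submodule.span_singleton_le_iff_mem] using hi⟩
  rw [h_zeros, card_image_of_injective _ hv, card_spannedPoints hv, add_comm, ← card_univ]
  exact card_filter_add_card_filter_not _

variable [Finite V] [Finite F]

lemma IsOvoid.hammingNorm_evaluationMap [DecidableEq F]
    (h : IsOvoid (spannedPoints F v)) (hv : Function.Injective fun i ↦ F ∙ v i) (hq : 2 < q)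
    (hf : f ≠ 0) :
    hammingNorm (evaluationMap v f) = q ^ 2 - q ∨ hammingNorm (evaluationMap v f) = q ^ 2 := by
  have h_ker : finrank F f.ker = 3 := by
    have := Dual.finrank_ker_add_one_of_ne_zero hf
    rw [h.finrank_eq_four] at this
    omega
  have h_weight := hammingNorm_evaluationMap_add_card_pointsIn (f := f) hv
  rw [h.card_eq] at h_weight
  have h_plane := h.card_pointsIn_plane hq h_ker
  omega

lemma IsOvoid.exists_hammingNorm_evaluationMap_eq [DecidableEq F]
    (h : IsOvoid (spannedPoints F v)) (hv : Function.Injective fun i ↦ F ∙ v i) (hq : 2 < q) :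
    ∃ f : Dual F V, f ≠ 0 ∧ hammingNorm (evaluationMap v f) = q ^ 2 - q := by
  obtain ⟨x, hx, y, hy, hxy⟩ := one_lt_card.mp (by rw [h.card_eq]; nlinarith)
  have h_line := finrank_sup_eq_two (h.finrank_eq_one x hx) (h.finrank_eq_one y hy) hxy
  have h_lt : x ⊔ y < ⊤ := Submodule.lt_top_of_finrank_lt_finrank
    (by rw [h_line, h.finrank_eq_four]; norm_num)
  obtain ⟨f, hf, h_le⟩ := Submodule.exists_le_ker_of_lt_top _ h_lt
  have h_two := two_le_card_pointsIn hx hy hxy (le_sup_left.trans h_le) (le_sup_right.trans h_le)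
  have h_weight := hammingNorm_evaluationMap_add_card_pointsIn (f := f) hv
  have h_or := h.hammingNorm_evaluationMap hv hq hf
  rw [h.card_eq] at h_weight
  exact ⟨f, hf, by omega⟩

lemma IsOvoid.injective_evaluationMap (h : IsOvoid (spannedPoints F v))
    (hv : Function.Injective fun i ↦ F ∙ v i) (hq : 2 < q) :
    Function.Injective (evaluationMap (F := F) v) := by
  classical
  refine (injective_iff_map_eq_zero _).mpr fun f hf ↦ ?_
  by_contra hf_ne
  have h_weight := h.hammingNorm_evaluationMap hv hq hf_ne
  rw [hf, hammingNorm_zero] at h_weight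
  have : q < q ^ 2 := lt_self_pow₀ (by omega) (by norm_num)
  omega

end Code

end OvoidCode

open OvoidCode

/-- Given nonzero vectors v₁, …, v_{q²+1} in GF(q)⁴ spanning the points of
an ovoid in PG(3,q) (pairwise non-proportional, no three linearly dependent), the code
C_V = { (u·v₁, …, u·v_{q²+1}) : u ∈ GF(q)⁴ } is a [q²+1, 4, q²−q] code over GF(q)
whose only nonzero weights are q²−q and q². -/
theorem ovoid_gives_ovoid_code {q : ℕ} (F : Type) [Field F] [Fintype F] [DecidableEq F]
    (hF : Fintype.card F = q) (hq : 2 < q)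
    (v : Fin (q ^ 2 + 1) → (Fin 4 → F))
    (hnz : ∀ i, v i ≠ 0)
    (hprop : ∀ i j, i ≠ j → ∀ c : F, v j ≠ c • v i)
    (hind : ∀ i j k, i ≠ j → i ≠ k → j ≠ k → LinearIndependent F ![v i, v j, v k]) :
    let CV : Set (Fin (q ^ 2 + 1) → F) :=
      Set.range (fun u : Fin 4 → F => fun i => ∑ k, u k * v i k)
    Module.finrank F (Submodule.span F CV) = 4 ∧
    (∀ c ∈ CV, c ≠ 0 → q ^ 2 - q ≤ hammingNorm c) ∧
    (∃ c ∈ CV, c ≠ 0 ∧ hammingNorm c = q ^ 2 - q) ∧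
    (∀ c ∈ CV, c ≠ 0 → hammingNorm c = q ^ 2 - q ∨ hammingNorm c = q ^ 2) := by
  obtain rfl : Nat.card F = q := by rw [Nat.card_eq_fintype_card, hF]
  intro CV
  have hCV : CV = LinearMap.range (evaluationMap (F := F) v) :=
    (dotProductEquiv F (Fin 4)).surjective.range_comp (evaluationMap v)
  have hv := injective_span_singleton hprop
  have h_ovoid : IsOvoid (spannedPoints F v) :=
    { isCap_spannedPoints hnz hind with
      finrank_eq_four := finrank_fin_fun F
      card_eq := by rw [card_spannedPoints hv, Fintype.card_fin] }
  have h_inj := h_ovoid.injective_evaluationMap hv hq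
  have h_weights : ∀ c ∈ CV, c ≠ 0 →
      hammingNorm c = Nat.card F ^ 2 - Nat.card F ∨ hammingNorm c = Nat.card F ^ 2 := by
    rw [hCV]
    rintro _ ⟨f, rfl⟩ hf
    exact h_ovoid.hammingNorm_evaluationMap hv hq ((map_ne_zero_iff _ h_inj).mp hf)
  refine ⟨?_, fun c hc hc_ne ↦ ?_, ?_, h_weights⟩
  · rw [hCV, Submodule.span_eq, LinearMap.finrank_range_of_inj h_inj, Subspace.dual_finrank_eq,
      finrank_fin_fun]
  · have := h_weights c hc hc_ne
    omega
  · obtain ⟨f, hf, h_weight⟩ := h_ovoid.exists_hammingNorm_evaluationMap_eq hv hq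
    rw [hCV]
    exact ⟨evaluationMap v f, ⟨f, rfl⟩, (map_ne_zero_iff _ h_inj).mpr hf, h_weight⟩
end

section
/- Let q > 2 be a prime power and let V be an ovoid in PG(3,q). Then every plane of PG(3,q) (i.e., every three-dimensional GF(q)-subspace of GF(q)^4, viewed as the set of points it contains) intersects V in either exactly 1 point or exactly q+1 points. -/
/-!
Let `K` be a cap of `q ^ 2 + 1` points. Counting along the `q + 1` lines of a plane through one of
its points of `K` shows that the plane carries at most `q + 2` points, and at most `q + 1` as soon
as it contains a tangent. The crux is that `q + 2` never occurs. A plane with `q + 2` points has no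
tangent, and counting along its lines through a point off `K` forces `q` to be even. For even `q`
the tangents of a plane with `q + 1` points pass through a common point `N`, its nucleus. Every
plane on `N` then has at most `q + 1` points.

The point `N` lies on a secant: otherwise `N` could be added to `K`, but a maximal cap has at most
`q ^ 2 + 1` points. All tangents through `N` lie in the plane of which `N` is the nucleus, so a
plane on `N` with other than `q + 1` points has at most one. Some such plane contains a tangent at
`x`, for any `x` in `K`. If `x` lay on a plane with `q + 2` points, the two planes would meet in a
tangent of the latter, which is impossible.

Now all planes have at most `q + 1` points, and counting along the planes on a secant shows that
each of them has exactly `q + 1`. So a plane has `0`, `1` or `q + 1` points, and a plane with none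
is excluded by counting along the planes on its intersection with a plane that has one.
-/

open Module Finset
open scoped LinearAlgebra.Projectivization

section Caps

variable {F E : Type*} [Field F] [AddCommGroup E] [Module F E]

theorem exists_submodule_between_finrank_eq [FiniteDimensional F E] {A B : Submodule F E}
    (hAB : A ≤ B) {n : ℕ} (hA : finrank F A ≤ n) (hB : n ≤ finrank F B) :
    ∃ X, A ≤ X ∧ X ≤ B ∧ finrank F X = n := by
  induction n, hA using Nat.le_induction with
  | base => exact ⟨A, le_rfl, hAB, rfl⟩
  | succ n _ ih =>
    obtain ⟨X, hAX, hXB, rfl⟩ := ih (by lia)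
    obtain ⟨v, hvB, hvX⟩ := SetLike.exists_of_lt (hXB.lt_of_ne (by rintro rfl; lia))
    exact ⟨X ⊔ F ∙ v, hAX.trans le_sup_left,
      sup_le hXB ((Submodule.span_singleton_le_iff_mem v B).mpr hvB),
      Submodule.finrank_sup_span_singleton hvX⟩

theorem finrank_inf_of_ne [FiniteDimensional F E] {A B C : Submodule F E} {m : ℕ}
    (hAC : A ≤ C) (hBC : B ≤ C) (hA : finrank F A = m + 1) (hB : finrank F B = m + 1)
    (hC : finrank F C = m + 2) (hne : A ≠ B) : finrank F (A ⊓ B : Submodule F E) = m := by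
  have hdim := Submodule.finrank_sup_add_finrank_inf_eq A B
  have hsup : finrank F (A ⊔ B : Submodule F E) ≤ finrank F C :=
    Submodule.finrank_mono (sup_le hAC hBC)
  have hlt : finrank F (A ⊓ B : Submodule F E) < finrank F A := by
    refine Submodule.finrank_lt_finrank_of_lt (inf_lt_left.mpr fun hAB ↦ hne ?_)
    exact Submodule.eq_of_le_of_finrank_eq hAB (hA.trans hB.symm)
  lia

theorem finrank_sup_of_ne [FiniteDimensional F E] {A B C : Submodule F E} {m : ℕ}
    (hCA : C ≤ A) (hCB : C ≤ B) (hC : finrank F C = m) (hA : finrank F A = m + 1)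
    (hB : finrank F B = m + 1) (hne : A ≠ B) : finrank F (A ⊔ B : Submodule F E) = m + 2 := by
  have hdim := Submodule.finrank_sup_add_finrank_inf_eq A B
  have hinf : finrank F C ≤ finrank F (A ⊓ B : Submodule F E) :=
    Submodule.finrank_mono (le_inf hCA hCB)
  have hlt : finrank F A < finrank F (A ⊔ B : Submodule F E) := by
    refine Submodule.finrank_lt_finrank_of_lt (left_lt_sup.mpr fun hBA ↦ hne ?_)
    exact (Submodule.eq_of_le_of_finrank_eq hBA (hB.trans hA.symm)).symm
  lia

theorem submodule_le_iff_rep_mem {x : ℙ F E} {X : Submodule F E} :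
    x.submodule ≤ X ↔ x.rep ∈ X := by
  rw [Projectivization.submodule_eq, Submodule.span_singleton_le_iff_mem]

theorem submodule_le_submodule_iff {x y : ℙ F E} : x.submodule ≤ y.submodule ↔ x = y := by
  refine ⟨fun h ↦ Projectivization.submodule_injective ?_, fun h ↦ h ▸ le_rfl⟩
  exact Submodule.eq_of_le_of_finrank_eq h (by simp only [Projectivization.finrank_submodule])

theorem finrank_submodule_sup_submodule [FiniteDimensional F E] {x y : ℙ F E} (hne : x ≠ y) :
    finrank F (x.submodule ⊔ y.submodule : Submodule F E) = 2 := by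
  rw [Projectivization.submodule_eq y, Submodule.finrank_sup_span_singleton,
    Projectivization.finrank_submodule]
  rw [← submodule_le_iff_rep_mem, submodule_le_submodule_iff]
  exact hne.symm

open Classical in
/-- The points of the point set `K` that lie on the projective subspace given by `X`, tested on
the chosen representative vector of each point. -/
noncomputable def pointsIn (K : Finset (ℙ F E)) (X : Submodule F E) : Finset (ℙ F E) :=
  {x ∈ K | x.rep ∈ X}

section pointsIn

variable {K : Finset (ℙ F E)} {X Y : Submodule F E} {x : ℙ F E}

theorem mem_pointsIn : x ∈ pointsIn K X ↔ x ∈ K ∧ x.submodule ≤ X := by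
  simp only [pointsIn, mem_filter, submodule_le_iff_rep_mem]

theorem card_pointsIn_mono (K : Finset (ℙ F E)) (h : X ≤ Y) :
    #(pointsIn K X) ≤ #(pointsIn K Y) :=
  card_le_card fun _ hx ↦ mem_pointsIn.mpr ((mem_pointsIn.mp hx).imp_right h.trans')

theorem pointsIn_bot : pointsIn K ⊥ = ∅ := by
  refine eq_empty_of_forall_notMem fun x hx ↦ ?_
  have hrep := submodule_le_iff_rep_mem.mp (mem_pointsIn.mp hx).2
  exact x.rep_nonzero ((Submodule.mem_bot F).mp hrep)

theorem pointsIn_top : pointsIn K ⊤ = K := by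
  ext x
  simp only [mem_pointsIn, le_top, and_true]

theorem pointsIn_submodule_of_mem (hx : x ∈ K) : pointsIn K x.submodule = {x} := by
  ext y
  simp only [mem_pointsIn, submodule_le_submodule_iff, mem_singleton]
  exact ⟨And.right, fun h ↦ ⟨h ▸ hx, h⟩⟩

theorem pointsIn_submodule_of_notMem (hx : x ∉ K) : pointsIn K x.submodule = ∅ := by
  refine eq_empty_of_forall_notMem fun y hy ↦ hx ?_
  obtain ⟨hyK, hyx⟩ := mem_pointsIn.mp hy
  exact submodule_le_submodule_iff.mp hyx ▸ hyK

theorem card_pointsIn_pos_of_mem (hx : x ∈ K) (hxX : x.submodule ≤ X) : 0 < #(pointsIn K X) :=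
  card_pos.mpr ⟨x, mem_pointsIn.mpr ⟨hx, hxX⟩⟩

theorem exists_mem_of_card_pointsIn_pos (h : 0 < #(pointsIn K X)) :
    ∃ x ∈ K, x.submodule ≤ X :=
  (card_pos.mp h).imp fun _ ↦ mem_pointsIn.mp

open Classical in
theorem card_pointsIn_map {ι : Type*} [Fintype ι] (v : ι → E) (hv : ∀ i, v i ≠ 0)
    (hinj : Function.Injective fun i ↦ Projectivization.mk F (v i) (hv i)) (X : Submodule F E) :
    #(pointsIn (univ.map ⟨_, hinj⟩) X) = #{i | v i ∈ X} := by
  have hrep (i : ι) : (Projectivization.mk F (v i) (hv i)).rep ∈ X ↔ v i ∈ X := by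
    rw [← submodule_le_iff_rep_mem, Projectivization.submodule_mk,
      Submodule.span_singleton_le_iff_mem]
  rw [pointsIn, filter_map, card_map]
  simp only [Function.comp_def, Function.Embedding.coeFn_mk, hrep]

end pointsIn

/-- A cap: a set of points of a projective space, no three of them on a line. -/
def IsCap (K : Finset (ℙ F E)) : Prop :=
  ∀ L : Submodule F E, finrank F L = 2 → #(pointsIn K L) ≤ 2

/-- `t` is a tangent of `K`: a line that meets `K` in exactly one point. -/
structure IsTangent (K : Finset (ℙ F E)) (t : Submodule F E) : Prop where
  finrank_eq : finrank F t = 2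
  card_pointsIn : #(pointsIn K t) = 1

/-- `s` is a secant of `K`: a line that meets `K` in exactly two points. -/
structure IsSecant (K : Finset (ℙ F E)) (s : Submodule F E) : Prop where
  finrank_eq : finrank F s = 2
  card_pointsIn : #(pointsIn K s) = 2

variable {K : Finset (ℙ F E)} {x y N : ℙ F E} {L s t τ σ π : Submodule F E}

theorem IsCap.isTangent_or_isSecant (hK : IsCap K) (hL : finrank F L = 2) (hxK : x ∈ K)
    (hxL : x.submodule ≤ L) : IsTangent K L ∨ IsSecant K L := by
  have hpos := card_pointsIn_pos_of_mem hxK hxL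
  have hle := hK L hL
  obtain hone | htwo : #(pointsIn K L) = 1 ∨ #(pointsIn K L) = 2 := by lia
  · exact .inl ⟨hL, hone⟩
  · exact .inr ⟨hL, htwo⟩

theorem IsCap.isSecant_sup [FiniteDimensional F E] (hK : IsCap K) (hxK : x ∈ K) (hyK : y ∈ K)
    (hne : x ≠ y) : IsSecant K (x.submodule ⊔ y.submodule) := by
  have hL := finrank_submodule_sup_submodule hne
  have hlt : 1 < #(pointsIn K (x.submodule ⊔ y.submodule)) := one_lt_card.mpr
    ⟨x, mem_pointsIn.mpr ⟨hxK, le_sup_left⟩, y, mem_pointsIn.mpr ⟨hyK, le_sup_right⟩, hne⟩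
  exact ⟨hL, (hK _ hL).antisymm hlt⟩

theorem IsCap.cons (hK : IsCap K) (hNK : N ∉ K) (hN : ∀ s, IsSecant K s → ¬ N.submodule ≤ s) :
    IsCap (K.cons N hNK) := fun L hL ↦ by
  have hle := hK L hL
  simp only [pointsIn, filter_cons]
  split_ifs with hNL
  · have htwo : #(pointsIn K L) ≠ 2 := fun h ↦ hN L ⟨hL, h⟩ (submodule_le_iff_rep_mem.mpr hNL)
    rw [card_cons, ← pointsIn]
    lia
  · exact hle

theorem exists_isCap_card_pointsIn_eq_ncard {V : Set E} (hV : V.Finite)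
    (hnz : ∀ v ∈ V, v ≠ 0)
    (hprop : ∀ u ∈ V, ∀ v ∈ V, u ≠ v → ∀ c : F, v ≠ c • u)
    (hind : ∀ u ∈ V, ∀ v ∈ V, ∀ w ∈ V, u ≠ v → u ≠ w → v ≠ w → LinearIndependent F ![u, v, w]) :
    ∃ K : Finset (ℙ F E), IsCap K ∧
      ∀ X : Submodule F E, #(pointsIn K X) = {v ∈ V | v ∈ X}.ncard := by
  classical
  have := hV.fintype
  have hinj : Function.Injective fun v : V ↦ Projectivization.mk F (v : E) (hnz v v.2) := by
    intro u v huv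
    obtain ⟨c, hc⟩ := (Projectivization.mk_eq_mk_iff' F _ _ _ _).mp huv
    by_contra hne
    exact hprop v v.2 u u.2 (fun h ↦ hne (Subtype.ext h.symm)) c hc.symm
  have hcard (X : Submodule F E) :
      #(pointsIn (univ.map ⟨_, hinj⟩) X) = {v ∈ V | v ∈ X}.ncard := by
    rw [card_pointsIn_map, ← Set.ncard_coe_finset,
      ← Set.ncard_image_of_injective _ Subtype.val_injective]
    congr 1
    ext v
    simp [and_comm]
  refine ⟨univ.map ⟨_, hinj⟩, fun L hL ↦ not_lt.mp fun hlt ↦ ?_, hcard⟩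
  rw [hcard, Set.two_lt_ncard_iff (hV.subset (Set.sep_subset V _))] at hlt
  obtain ⟨u, v, w, ⟨hu, huL⟩, ⟨hv, hvL⟩, ⟨hw, hwL⟩, huv, huw, hvw⟩ := hlt
  have hspan : Submodule.span F (Set.range ![u, v, w]) ≤ L := by
    rw [Submodule.span_le, Set.range_subset_iff]
    intro i
    fin_cases i <;> assumption
  have := Module.finite_of_finrank_eq_succ hL
  have hdim := Submodule.finrank_mono hspan
  rw [finrank_span_eq_card (hind u hu v hv w hw huv huw hvw), Fintype.card_fin, hL] at hdim
  lia

open Classical in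
theorem card_filter_mem_notMem_add {ι : Type*} (S : Finset ι) (v : ι → E)
    {A X : Submodule F E} (hAX : A ≤ X) :
    #{i ∈ S | v i ∈ X ∧ v i ∉ A} + #{i ∈ S | v i ∈ A} = #{i ∈ S | v i ∈ X} := by
  rw [← card_filter_add_card_filter_not (s := {i ∈ S | v i ∈ X}) (fun i ↦ v i ∈ A), filter_filter,
    filter_filter, add_comm]
  congr 2
  exact filter_congr fun i _ ↦ ⟨fun hi ↦ ⟨hAX hi, hi⟩, And.right⟩

variable [Finite E]

local notation "q" => Nat.card F

/-! ### Pencils -/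

/-- The pencil of subspaces between `A` and `B` whose dimension exceeds that of `A` by one. When
`B` has codimension two over `A` this covers the points of a line (`A = ⊥`), the lines of a plane
through a point, and the planes of a solid through a line. -/
noncomputable def pencil (A B : Submodule F E) : Finset (Submodule F E) :=
  (Set.toFinite {X | A ≤ X ∧ X ≤ B ∧ finrank F X = finrank F A + 1}).toFinset

section pencil

variable {A B X : Submodule F E}

theorem mem_pencil : X ∈ pencil A B ↔ A ≤ X ∧ X ≤ B ∧ finrank F X = finrank F A + 1 :=
  Set.Finite.mem_toFinset _

theorem sup_span_singleton_mem_pencil (hAB : A ≤ B) {v : E} (hvB : v ∈ B) (hvA : v ∉ A) :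
    A ⊔ F ∙ v ∈ pencil A B :=
  mem_pencil.mpr ⟨le_sup_left, sup_le hAB ((Submodule.span_singleton_le_iff_mem v B).mpr hvB),
    Submodule.finrank_sup_span_singleton hvA⟩

theorem sup_span_singleton_eq_iff_of_mem_pencil (hX : X ∈ pencil A B) {v : E} (hvA : v ∉ A) :
    A ⊔ F ∙ v = X ↔ v ∈ X := by
  obtain ⟨hAX, -, hdim⟩ := mem_pencil.mp hX
  refine ⟨fun h ↦ h ▸ Submodule.mem_sup_right (Submodule.mem_span_singleton_self v), fun hvX ↦ ?_⟩
  exact Submodule.eq_of_le_of_finrank_eq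
    (sup_le hAX ((Submodule.span_singleton_le_iff_mem v X).mpr hvX))
    ((Submodule.finrank_sup_span_singleton hvA).trans hdim.symm)

open Classical in
theorem sum_pencil_card_filter_mem {ι : Type*} (S : Finset ι) (v : ι → E) (hAB : A ≤ B) :
    ∑ X ∈ pencil A B, #{i ∈ S | v i ∈ X ∧ v i ∉ A} = #{i ∈ S | v i ∈ B ∧ v i ∉ A} := by
  rw [card_eq_sum_card_fiberwise (f := fun i ↦ A ⊔ F ∙ v i) (t := pencil A B)]
  · refine sum_congr rfl fun X hX ↦ congrArg card ?_
    ext i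
    simp only [mem_filter]
    constructor
    · rintro ⟨hiS, hiX, hiA⟩
      exact ⟨⟨hiS, (mem_pencil.mp hX).2.1 hiX, hiA⟩,
        (sup_span_singleton_eq_iff_of_mem_pencil hX hiA).mpr hiX⟩
    · rintro ⟨⟨hiS, -, hiA⟩, hi⟩
      exact ⟨hiS, (sup_span_singleton_eq_iff_of_mem_pencil hX hiA).mp hi, hiA⟩
  · intro i hi
    obtain ⟨-, hiB, hiA⟩ := mem_filter.mp hi
    exact sup_span_singleton_mem_pencil hAB hiB hiA

open Classical in
theorem sum_pencil_card_filter_mem_add {ι : Type*} (S : Finset ι) (v : ι → E) (hAB : A ≤ B) :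
    ∑ X ∈ pencil A B, #{i ∈ S | v i ∈ X} + #{i ∈ S | v i ∈ A} =
      #{i ∈ S | v i ∈ B} + #(pencil A B) * #{i ∈ S | v i ∈ A} := by
  rw [← card_filter_mem_notMem_add S v hAB, ← sum_pencil_card_filter_mem S v hAB,
    sum_congr rfl fun X hX ↦ (card_filter_mem_notMem_add S v (mem_pencil.mp hX).1).symm,
    sum_add_distrib, sum_const, smul_eq_mul]
  ring

theorem one_lt_card_of_finrank_pos (hX : 0 < finrank F X) : 1 < q := by
  have := Module.nontrivial_of_finrank_pos hX
  obtain ⟨v, hv⟩ := exists_ne (0 : X)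
  have : Finite F := Finite.of_injective _ (smul_left_injective F hv)
  exact Finite.one_lt_card

theorem card_pencil (hAB : A ≤ B) (hdim : finrank F B = finrank F A + 2) :
    #(pencil A B) = q + 1 := by
  classical
  have := Fintype.ofFinite E
  have hq : 1 < q := one_lt_card_of_finrank_pos (X := B) (by lia)
  have : Finite F := Nat.finite_of_card_ne_zero (by lia)
  have hcard (Y : Submodule F E) : #{v : E | id v ∈ Y} = q ^ finrank F Y := by
    rw [← Module.natCard_eq_pow_finrank, Nat.card_eq_fintype_card, Fintype.card_subtype]
    rfl
  have hsum := sum_pencil_card_filter_mem_add (univ : Finset E) id hAB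
  simp only [hcard] at hsum
  rw [sum_congr rfl fun X hX ↦ by rw [(mem_pencil.mp hX).2.2], sum_const, smul_eq_mul, hdim] at hsum
  obtain ⟨r, hr⟩ : ∃ r, q = r + 2 := Nat.exists_eq_add_of_le' hq
  have hpos : 0 < q ^ finrank F A * (r + 1) := by positivity
  refine Nat.eq_of_mul_eq_mul_left hpos ?_
  rw [hr] at hsum ⊢
  ring_nf at hsum ⊢
  lia

theorem sum_pencil_card_pointsIn (K : Finset (ℙ F E)) (hAB : A ≤ B)
    (hdim : finrank F B = finrank F A + 2) :
    ∑ X ∈ pencil A B, #(pointsIn K X) = #(pointsIn K B) + q * #(pointsIn K A) := by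
  have hsum := sum_pencil_card_filter_mem_add K Projectivization.rep hAB
  rw [card_pencil hAB hdim] at hsum
  simp only [pointsIn]
  lia

theorem mem_pencil_bot : X ∈ pencil ⊥ B ↔ ∃ x : ℙ F E, x.submodule = X ∧ X ≤ B := by
  rw [mem_pencil, finrank_bot, zero_add]
  constructor
  · rintro ⟨-, hXB, hX⟩
    exact ⟨.mk'' X hX, Projectivization.submodule_mk'' X hX, hXB⟩
  · rintro ⟨x, rfl, hxB⟩
    exact ⟨bot_le, hxB, x.finrank_submodule⟩

theorem mem_pencil_submodule {x : ℙ F E} :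
    X ∈ pencil x.submodule B ↔ x.submodule ≤ X ∧ X ≤ B ∧ finrank F X = 2 := by
  rw [mem_pencil, x.finrank_submodule]

theorem mem_pencil_top (hA : finrank F A = 2) :
    X ∈ pencil A ⊤ ↔ A ≤ X ∧ finrank F X = 3 := by
  simp only [mem_pencil, hA, le_top, true_and]

end pencil

theorem card_pencil_submodule (hτ : finrank F τ = 3) (hx : x.submodule ≤ τ) :
    #(pencil x.submodule τ) = q + 1 :=
  card_pencil hx (by rw [hτ, x.finrank_submodule])

theorem sum_pencil_submodule_card_pointsIn (K : Finset (ℙ F E)) (hτ : finrank F τ = 3)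
    (hx : x.submodule ≤ τ) :
    ∑ L ∈ pencil x.submodule τ, #(pointsIn K L) =
      #(pointsIn K τ) + q * #(pointsIn K x.submodule) :=
  sum_pencil_card_pointsIn K hx (by rw [hτ, x.finrank_submodule])

theorem card_pencil_top (hE : finrank F E = 4) (hL : finrank F L = 2) : #(pencil L ⊤) = q + 1 :=
  card_pencil le_top (by rw [finrank_top, hE, hL])

theorem sum_pencil_top_card_pointsIn (K : Finset (ℙ F E)) (hE : finrank F E = 4)
    (hL : finrank F L = 2) :
    ∑ τ ∈ pencil L ⊤, #(pointsIn K τ) = #K + q * #(pointsIn K L) := by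
  rw [sum_pencil_card_pointsIn K le_top (by rw [finrank_top, hE, hL]), pointsIn_top]

/-! ### Plane sections of caps -/

/-- The tangents of `K` that lie in `τ` and pass through the point `x`. -/
noncomputable def tangentsThrough (K : Finset (ℙ F E)) (x : ℙ F E) (τ : Submodule F E) :
    Finset (Submodule F E) :=
  {L ∈ pencil x.submodule τ | #(pointsIn K L) = 1}

theorem mem_tangentsThrough :
    L ∈ tangentsThrough K x τ ↔ x.submodule ≤ L ∧ L ≤ τ ∧ IsTangent K L := by
  simp only [tangentsThrough, mem_filter, mem_pencil_submodule]
  exact ⟨fun ⟨⟨hxL, hLτ, hL⟩, h⟩ ↦ ⟨hxL, hLτ, hL, h⟩, fun ⟨hxL, hLτ, h⟩ ↦ ⟨⟨hxL, hLτ, h.1⟩, h.2⟩⟩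

theorem sum_pencil_submodule_card_pointsIn_add_card_tangentsThrough (K : Finset (ℙ F E))
    (hτ : finrank F τ = 3) (hx : x.submodule ≤ τ) :
    ∑ L ∈ pencil x.submodule τ, (#(pointsIn K L) + if #(pointsIn K L) = 1 then 1 else 0) =
      #(pointsIn K τ) + q * #(pointsIn K x.submodule) + #(tangentsThrough K x τ) := by
  rw [sum_add_distrib, sum_pencil_submodule_card_pointsIn K hτ hx, tangentsThrough, card_filter]

theorem IsCap.card_tangentsThrough_add_card_pointsIn (hK : IsCap K) (hτ : finrank F τ = 3)
    (hxK : x ∈ K) (hx : x.submodule ≤ τ) :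
    #(tangentsThrough K x τ) + #(pointsIn K τ) = q + 2 := by
  have hline : ∀ L ∈ pencil x.submodule τ,
      #(pointsIn K L) + (if #(pointsIn K L) = 1 then 1 else 0) = 2 := fun L hL ↦ by
    obtain ⟨hxL, -, hL⟩ := mem_pencil_submodule.mp hL
    have hpos := card_pointsIn_pos_of_mem hxK hxL
    have hle := hK L hL
    split_ifs <;> lia
  have hsum := sum_pencil_submodule_card_pointsIn_add_card_tangentsThrough K hτ hx
  rw [sum_congr rfl hline, sum_const, smul_eq_mul, card_pencil_submodule hτ hx,
    pointsIn_submodule_of_mem hxK, card_singleton] at hsum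
  lia

theorem IsCap.even_card_tangentsThrough_add_card_pointsIn (hK : IsCap K) (hτ : finrank F τ = 3)
    (hxK : x ∉ K) (hx : x.submodule ≤ τ) :
    Even (#(tangentsThrough K x τ) + #(pointsIn K τ)) := by
  have hline : ∀ L ∈ pencil x.submodule τ,
      Even (#(pointsIn K L) + if #(pointsIn K L) = 1 then 1 else 0) := fun L hL ↦ by
    have hle := hK L (mem_pencil_submodule.mp hL).2.2
    interval_cases #(pointsIn K L) <;> decide
  have hsum := even_sum _ hline
  rwa [sum_pencil_submodule_card_pointsIn_add_card_tangentsThrough K hτ hx,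
    pointsIn_submodule_of_notMem hxK, card_empty, mul_zero, add_zero, add_comm] at hsum

theorem IsCap.card_pointsIn_plane_le (hK : IsCap K) (hτ : finrank F τ = 3) :
    #(pointsIn K τ) ≤ q + 2 := by
  rcases Nat.eq_zero_or_pos #(pointsIn K τ) with hzero | hpos
  · lia
  · obtain ⟨x, hxK, hx⟩ := exists_mem_of_card_pointsIn_pos hpos
    have := hK.card_tangentsThrough_add_card_pointsIn hτ hxK hx
    lia

theorem IsCap.card_pointsIn_plane_le_of_isTangent (hK : IsCap K) (hτ : finrank F τ = 3)
    (ht : IsTangent K t) (htτ : t ≤ τ) : #(pointsIn K τ) ≤ q + 1 := by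
  obtain ⟨x, hxK, hxt⟩ := exists_mem_of_card_pointsIn_pos (ht.card_pointsIn ▸ one_pos)
  have hpos : 0 < #(tangentsThrough K x τ) :=
    card_pos.mpr ⟨t, mem_tangentsThrough.mpr ⟨hxt, htτ, ht⟩⟩
  have := hK.card_tangentsThrough_add_card_pointsIn hτ hxK (hxt.trans htτ)
  lia

theorem IsCap.exists_isTangent_of_card_pointsIn_le (hK : IsCap K) (hτ : finrank F τ = 3)
    (hτK : #(pointsIn K τ) ≤ q + 1) (hxK : x ∈ K) (hx : x.submodule ≤ τ) :
    ∃ t, x.submodule ≤ t ∧ t ≤ τ ∧ IsTangent K t := by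
  have hcount := hK.card_tangentsThrough_add_card_pointsIn hτ hxK hx
  obtain ⟨t, ht⟩ : (tangentsThrough K x τ).Nonempty := card_pos.mp (by lia)
  exact ⟨t, mem_tangentsThrough.mp ht⟩

theorem IsCap.exists_notMem_of_line (hK : IsCap K) (hL : finrank F L = 2) :
    ∃ y : ℙ F E, y ∉ K ∧ y.submodule ≤ L := by
  by_contra! hall
  have hdim : finrank F L = finrank F (⊥ : Submodule F E) + 2 := by rw [hL, finrank_bot]
  have hsum := sum_pencil_card_pointsIn K bot_le hdim
  have hone : ∀ X ∈ pencil ⊥ L, #(pointsIn K X) = 1 := fun X hX ↦ by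
    obtain ⟨y, rfl, hy⟩ := mem_pencil_bot.mp hX
    have hyK : y ∈ K := by_contra fun hyK ↦ hall y hyK hy
    rw [pointsIn_submodule_of_mem hyK, card_singleton]
  rw [sum_congr rfl hone, sum_const, smul_eq_mul, card_pencil bot_le hdim, pointsIn_bot,
    card_empty] at hsum
  have hq : 1 < q := one_lt_card_of_finrank_pos (X := L) (by lia)
  have := hK L hL
  lia

theorem IsCap.exists_notMem_of_plane (hK : IsCap K) (hτ : finrank F τ = 3) :
    ∃ y : ℙ F E, y ∉ K ∧ y.submodule ≤ τ := by
  obtain ⟨L, -, hLτ, hL⟩ := exists_submodule_between_finrank_eq (n := 2) (bot_le (a := τ))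
    (by rw [finrank_bot]; lia) (by lia)
  obtain ⟨y, hyK, hyL⟩ := hK.exists_notMem_of_line hL
  exact ⟨y, hyK, hyL.trans hLτ⟩

theorem IsCap.even_card_of_card_pointsIn_plane_eq (hK : IsCap K) (hτ : finrank F τ = 3)
    (hτK : #(pointsIn K τ) = q + 2) : Even q := by
  obtain ⟨y, hyK, hy⟩ := hK.exists_notMem_of_plane hτ
  have hnone : tangentsThrough K y τ = ∅ := eq_empty_of_forall_notMem fun t ht ↦ by
    obtain ⟨-, htτ, ht⟩ := mem_tangentsThrough.mp ht
    have := hK.card_pointsIn_plane_le_of_isTangent hτ ht htτ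
    lia
  have hparity := hK.even_card_tangentsThrough_add_card_pointsIn hτ hyK hy
  rw [hnone, card_empty, hτK] at hparity
  grind

/-- The tangents of `K` that lie in `τ`, as a finite set to count. -/
noncomputable def tangentsIn (K : Finset (ℙ F E)) (τ : Submodule F E) : Finset (Submodule F E) :=
  (Set.toFinite {L | L ≤ τ ∧ IsTangent K L}).toFinset

theorem mem_tangentsIn : L ∈ tangentsIn K τ ↔ L ≤ τ ∧ IsTangent K L :=
  Set.Finite.mem_toFinset _

theorem IsCap.card_tangentsThrough_eq_one (hK : IsCap K) (hσ : finrank F σ = 3)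
    (hσK : #(pointsIn K σ) = q + 1) (hxK : x ∈ K) (hx : x.submodule ≤ σ) :
    #(tangentsThrough K x σ) = 1 := by
  have := hK.card_tangentsThrough_add_card_pointsIn hσ hxK hx
  lia

theorem IsCap.card_tangentsIn_le (hK : IsCap K) (hσ : finrank F σ = 3)
    (hσK : #(pointsIn K σ) = q + 1) : #(tangentsIn K σ) ≤ q + 1 := by
  classical
  have hcover : tangentsIn K σ ⊆ (pointsIn K σ).biUnion (tangentsThrough K · σ) := fun t ht ↦ by
    obtain ⟨htσ, ht⟩ := mem_tangentsIn.mp ht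
    obtain ⟨x, hxK, hxt⟩ := exists_mem_of_card_pointsIn_pos (ht.card_pointsIn ▸ one_pos)
    exact mem_biUnion.mpr
      ⟨x, mem_pointsIn.mpr ⟨hxK, hxt.trans htσ⟩, mem_tangentsThrough.mpr ⟨hxt, htσ, ht⟩⟩
  calc #(tangentsIn K σ) ≤ #((pointsIn K σ).biUnion (tangentsThrough K · σ)) := card_le_card hcover
    _ ≤ #(pointsIn K σ) * 1 := card_biUnion_le_card_mul _ _ _ fun x hx ↦
        (hK.card_tangentsThrough_eq_one hσ hσK (mem_pointsIn.mp hx).1 (mem_pointsIn.mp hx).2).le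
    _ = q + 1 := by rw [mul_one, hσK]

theorem IsCap.exists_isTangent_of_even (hK : IsCap K) (hσ : finrank F σ = 3)
    (hσK : #(pointsIn K σ) = q + 1) (heven : Even q) (hy : y.submodule ≤ σ) :
    ∃ t, y.submodule ≤ t ∧ t ≤ σ ∧ IsTangent K t := by
  by_cases hyK : y ∈ K
  · exact hK.exists_isTangent_of_card_pointsIn_le hσ hσK.le hyK hy
  · have hparity := hK.even_card_tangentsThrough_add_card_pointsIn hσ hyK hy
    rw [hσK] at hparity
    obtain ⟨t, ht⟩ : (tangentsThrough K y σ).Nonempty := card_pos.mp (by grind)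
    exact ⟨t, mem_tangentsThrough.mp ht⟩

-- The `q + 1` tangents in `σ` cover the `q + 1` points of the secant, hence cover each once.
theorem IsCap.eq_of_isTangent_of_le_isSecant (hK : IsCap K) (hσ : finrank F σ = 3)
    (hσK : #(pointsIn K σ) = q + 1) (heven : Even q) (hs : IsSecant K s) (hsσ : s ≤ σ)
    (hys : y.submodule ≤ s) (ht : t ∈ tangentsThrough K y σ) (hL : L ∈ tangentsThrough K y σ) :
    t = L := by
  have hmeet : ∀ M ∈ tangentsIn K σ, finrank F (M ⊓ s : Submodule F E) = 1 := fun M hM ↦ by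
    obtain ⟨hMσ, hM⟩ := mem_tangentsIn.mp hM
    refine finrank_inf_of_ne hMσ hsσ hM.finrank_eq hs.finrank_eq hσ ?_
    rintro rfl
    have := hM.card_pointsIn.symm.trans hs.card_pointsIn
    lia
  have hmeet_eq {z : ℙ F E} (hzs : z.submodule ≤ s) {M} (hM : M ∈ tangentsThrough K z σ) :
      M ∈ tangentsIn K σ ∧ M ⊓ s = z.submodule := by
    obtain ⟨hzM, hMσ⟩ := mem_tangentsThrough.mp hM
    have hMmem := mem_tangentsIn.mpr hMσ
    refine ⟨hMmem, (Submodule.eq_of_le_of_finrank_eq (le_inf hzM hzs) ?_).symm⟩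
    rw [hmeet M hMmem, z.finrank_submodule]
  have hmaps : Set.MapsTo (· ⊓ s) (tangentsIn K σ : Set (Submodule F E)) (pencil ⊥ s) :=
    fun M hM ↦ mem_pencil_bot.mpr
      ⟨.mk'' _ (hmeet M hM), Projectivization.submodule_mk'' _ _, inf_le_right⟩
  have hsurj : Set.SurjOn (· ⊓ s) (tangentsIn K σ : Set (Submodule F E)) (pencil ⊥ s) := by
    intro Z hZ
    obtain ⟨z, rfl, hzs⟩ := mem_pencil_bot.mp hZ
    obtain ⟨M, hM⟩ := hK.exists_isTangent_of_even hσ hσK heven (hzs.trans hsσ)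
    exact ⟨M, hmeet_eq hzs (mem_tangentsThrough.mpr hM)⟩
  have hcard : #(tangentsIn K σ) ≤ #(pencil ⊥ s) :=
    (hK.card_tangentsIn_le hσ hσK).trans_eq
      (card_pencil bot_le (by rw [hs.finrank_eq, finrank_bot])).symm
  obtain ⟨htmem, hts⟩ := hmeet_eq hys ht
  obtain ⟨hLmem, hLs⟩ := hmeet_eq hys hL
  exact injOn_of_surjOn_of_card_le _ hmaps hsurj hcard htmem hLmem (hts.trans hLs.symm)

/-! ### Nuclei -/

/-- `N` is a nucleus of the plane section of `K` by `σ`: a point of the plane `σ` off `K` such that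
every line of `σ` through `N` is tangent to `K`. -/
structure IsNucleus (K : Finset (ℙ F E)) (N : ℙ F E) (σ : Submodule F E) : Prop where
  finrank_eq : finrank F σ = 3
  submodule_le : N.submodule ≤ σ
  notMem : N ∉ K
  isTangent : ∀ L, N.submodule ≤ L → L ≤ σ → finrank F L = 2 → IsTangent K L

theorem IsCap.exists_isNucleus (hK : IsCap K) (hσ : finrank F σ = 3)
    (hσK : #(pointsIn K σ) = q + 1) (heven : Even q) (ht : IsTangent K t) (htσ : t ≤ σ) :
    ∃ N : ℙ F E, N.submodule ≤ t ∧ IsNucleus K N σ := by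
  have hq : 1 < q := one_lt_card_of_finrank_pos (X := σ) (by lia)
  obtain ⟨x, hxσ, hxt⟩ : ∃ x ∈ pointsIn K σ, x ∉ pointsIn K t :=
    exists_mem_notMem_of_card_lt_card (by rw [ht.card_pointsIn, hσK]; lia)
  obtain ⟨hxK, hxσ⟩ := mem_pointsIn.mp hxσ
  obtain ⟨t', hxt', ht'σ, ht'⟩ := hK.exists_isTangent_of_card_pointsIn_le hσ hσK.le hxK hxσ
  have hne : t ≠ t' := fun h ↦ hxt (mem_pointsIn.mpr ⟨hxK, h ▸ hxt'⟩)
  have hdim := finrank_inf_of_ne htσ ht'σ ht.finrank_eq ht'.finrank_eq hσ hne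
  obtain ⟨N, hN⟩ : ∃ N : ℙ F E, N.submodule = t ⊓ t' :=
    ⟨.mk'' _ hdim, Projectivization.submodule_mk'' _ _⟩
  have hNt : N.submodule ≤ t := hN.trans_le inf_le_left
  have hmem : t ∈ tangentsThrough K N σ := mem_tangentsThrough.mpr ⟨hNt, htσ, ht⟩
  have hmem' : t' ∈ tangentsThrough K N σ :=
    mem_tangentsThrough.mpr ⟨hN.trans_le inf_le_right, ht'σ, ht'⟩
  have hNσ := hNt.trans htσ
  have hNK : N ∉ K := fun hNK ↦
    hne (card_le_one.mp (hK.card_tangentsThrough_eq_one hσ hσK hNK hNσ).le t hmem t' hmem')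
  have hle_one : ∀ L ∈ pencil N.submodule σ, #(pointsIn K L) ≤ 1 := fun L hL ↦ by
    obtain ⟨hNL, hLσ, hL⟩ := mem_pencil_submodule.mp hL
    have htwo : #(pointsIn K L) ≠ 2 := fun h ↦
      hne (hK.eq_of_isTangent_of_le_isSecant hσ hσK heven ⟨hL, h⟩ hLσ hNL hmem hmem')
    have := hK L hL
    lia
  have hsum : ∑ L ∈ pencil N.submodule σ, #(pointsIn K L) = ∑ L ∈ pencil N.submodule σ, 1 := by
    rw [sum_pencil_submodule_card_pointsIn K hσ hNσ, pointsIn_submodule_of_notMem hNK, card_empty,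
      hσK, sum_const, card_pencil_submodule hσ hNσ, smul_eq_mul]
    lia
  exact ⟨N, hNt, hσ, hNσ, hNK, fun L hNL hLσ hL ↦
    ⟨hL, (sum_eq_sum_iff_of_le hle_one).mp hsum L (mem_pencil_submodule.mpr ⟨hNL, hLσ, hL⟩)⟩⟩

theorem IsNucleus.card_pointsIn (hN : IsNucleus K N σ) : #(pointsIn K σ) = q + 1 := by
  have hone : ∀ L ∈ pencil N.submodule σ, #(pointsIn K L) = 1 := fun L hL ↦ by
    obtain ⟨hNL, hLσ, hL⟩ := mem_pencil_submodule.mp hL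
    exact (hN.isTangent L hNL hLσ hL).card_pointsIn
  have hsum := sum_pencil_submodule_card_pointsIn K hN.finrank_eq hN.submodule_le
  rw [sum_congr rfl hone, sum_const, card_pencil_submodule hN.finrank_eq hN.submodule_le,
    pointsIn_submodule_of_notMem hN.notMem, card_empty, smul_eq_mul] at hsum
  lia

theorem IsCap.exists_plane_card_eq_of_isTangent (hK : IsCap K) (hE : finrank F E = 4)
    (hcard : q ^ 2 + 1 ≤ #K) (ht : IsTangent K t) :
    ∃ σ, t ≤ σ ∧ finrank F σ = 3 ∧ #(pointsIn K σ) = q + 1 := by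
  by_contra! hne
  have hle : ∀ σ ∈ pencil t ⊤, #(pointsIn K σ) ≤ q := fun σ hσ ↦ by
    obtain ⟨htσ, hσ⟩ := (mem_pencil_top ht.finrank_eq).mp hσ
    have := hK.card_pointsIn_plane_le_of_isTangent hσ ht htσ
    have := hne σ htσ hσ
    lia
  have hsum := sum_le_card_nsmul _ _ _ hle
  rw [sum_pencil_top_card_pointsIn K hE ht.finrank_eq, card_pencil_top hE ht.finrank_eq,
    ht.card_pointsIn, smul_eq_mul] at hsum
  nlinarith

theorem IsTangent.exists_plane_card_ne (ht : IsTangent K t) (hE : finrank F E = 4)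
    (hcard : #K ≠ q ^ 2 + q + 1) :
    ∃ τ, t ≤ τ ∧ finrank F τ = 3 ∧ #(pointsIn K τ) ≠ q + 1 := by
  by_contra! hall
  have hsum := sum_pencil_top_card_pointsIn K hE ht.finrank_eq
  rw [sum_congr rfl fun τ hτ ↦ (mem_pencil_top ht.finrank_eq).mp hτ |>.elim (hall τ), sum_const,
    card_pencil_top hE ht.finrank_eq, ht.card_pointsIn, smul_eq_mul] at hsum
  exact hcard (by linarith)

theorem IsSecant.card_le_of_forall_plane_le (hs : IsSecant K s) (hE : finrank F E = 4)
    (hle : ∀ τ ∈ pencil s ⊤, #(pointsIn K τ) ≤ q + 1) : #K ≤ q ^ 2 + 1 := by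
  have hsum := sum_le_card_nsmul _ _ _ hle
  rw [sum_pencil_top_card_pointsIn K hE hs.finrank_eq, card_pencil_top hE hs.finrank_eq,
    hs.card_pointsIn, smul_eq_mul] at hsum
  linarith

theorem IsSecant.card_pointsIn_plane_eq_of_forall_le (hs : IsSecant K s) (hE : finrank F E = 4)
    (hcard : #K = q ^ 2 + 1) (hle : ∀ τ ∈ pencil s ⊤, #(pointsIn K τ) ≤ q + 1) :
    ∀ τ ∈ pencil s ⊤, #(pointsIn K τ) = q + 1 := by
  refine (sum_eq_sum_iff_of_le hle).mp ?_
  rw [sum_pencil_top_card_pointsIn K hE hs.finrank_eq, sum_const, card_pencil_top hE hs.finrank_eq,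
    hs.card_pointsIn, hcard, smul_eq_mul]
  ring

theorem IsCap.card_pointsIn_plane_eq_of_forall_not_isTangent (hK : IsCap K)
    (hτ : finrank F τ = 3) (hxK : x ∈ K) (hx : x.submodule ≤ τ)
    (hnone : ∀ t, x.submodule ≤ t → ¬ IsTangent K t) :
    #(pointsIn K τ) = q + 2 := by
  refine (hK.card_pointsIn_plane_le hτ).antisymm (not_lt.mp fun hlt ↦ ?_)
  obtain ⟨t, hxt, -, ht⟩ := hK.exists_isTangent_of_card_pointsIn_le hτ (by lia) hxK hx
  exact hnone t hxt ht

theorem IsCap.card_eq_of_forall_not_isTangent (hK : IsCap K) (hE : finrank F E = 4)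
    (hxK : x ∈ K) (hnone : ∀ t, x.submodule ≤ t → ¬ IsTangent K t) : #K = q ^ 2 + q + 2 := by
  obtain ⟨L, hxL, -, hL⟩ := exists_submodule_between_finrank_eq (n := 2) (le_top (a := x.submodule))
    (by rw [x.finrank_submodule]; lia) (by rw [finrank_top, hE]; lia)
  have hsec := (hK.isTangent_or_isSecant hL hxK hxL).resolve_left (hnone L hxL)
  have hplane : ∀ τ ∈ pencil L ⊤, #(pointsIn K τ) = q + 2 := fun τ hτ ↦ by
    obtain ⟨hLτ, hτ⟩ := (mem_pencil_top hL).mp hτ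
    exact hK.card_pointsIn_plane_eq_of_forall_not_isTangent hτ hxK (hxL.trans hLτ) hnone
  have hsum := sum_pencil_top_card_pointsIn K hE hL
  rw [sum_congr rfl hplane, sum_const, card_pencil_top hE hL, hsec.card_pointsIn,
    smul_eq_mul] at hsum
  linarith

theorem IsCap.exists_isTangent_of_mem (hK : IsCap K) (hE : finrank F E = 4)
    (hcard : #K ≠ q ^ 2 + q + 2) (hxK : x ∈ K) : ∃ t, x.submodule ≤ t ∧ IsTangent K t := by
  by_contra! hnone
  exact hcard (hK.card_eq_of_forall_not_isTangent hE hxK hnone)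

theorem IsCap.exists_external_line (hK : IsCap K) (hτ : finrank F τ = 3)
    (hτK : #(pointsIn K τ) = q + 2) :
    ∃ L : Submodule F E, finrank F L = 2 ∧ pointsIn K L = ∅ := by
  obtain ⟨y, hyK, hy⟩ := hK.exists_notMem_of_plane hτ
  by_contra! hmeets
  have hle : ∀ L ∈ pencil y.submodule τ, 2 ≤ #(pointsIn K L) := fun L hL ↦ by
    obtain ⟨-, hLτ, hL⟩ := mem_pencil_submodule.mp hL
    have hpos := card_pos.mpr (hmeets L hL)
    have hne : #(pointsIn K L) ≠ 1 := fun h ↦ by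
      have := hK.card_pointsIn_plane_le_of_isTangent hτ ⟨hL, h⟩ hLτ
      lia
    lia
  have hsum := card_nsmul_le_sum _ _ _ hle
  rw [sum_pencil_submodule_card_pointsIn K hτ hy, pointsIn_submodule_of_notMem hyK, card_empty, hτK,
    card_pencil_submodule hτ hy, smul_eq_mul] at hsum
  have : 1 < q := one_lt_card_of_finrank_pos (X := τ) (by lia)
  lia

-- Without tangents every plane on an external line meets `K` in `0` or `q + 2` points, so `q + 2`
-- divides `#K = (q + 2) * (q - 1) + 4`.
theorem IsCap.exists_isTangent (hK : IsCap K) (hE : finrank F E = 4) (hne : K.Nonempty)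
    (hq : 2 < q) : ∃ t, IsTangent K t := by
  by_contra! hnone
  obtain ⟨x, hxK⟩ := hne
  have hcard := hK.card_eq_of_forall_not_isTangent hE hxK fun t _ ↦ hnone t
  have hplane {τ : Submodule F E} (hτ : finrank F τ = 3) :
      #(pointsIn K τ) = 0 ∨ #(pointsIn K τ) = q + 2 := by
    refine (Nat.eq_zero_or_pos _).imp_right fun hpos ↦ ?_
    obtain ⟨z, hzK, hz⟩ := exists_mem_of_card_pointsIn_pos hpos
    exact hK.card_pointsIn_plane_eq_of_forall_not_isTangent hτ hzK hz fun t _ ↦ hnone t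
  obtain ⟨τ, hxτ, -, hτ⟩ := exists_submodule_between_finrank_eq (n := 3) (le_top (a := x.submodule))
    (by rw [x.finrank_submodule]; lia) (by rw [finrank_top, hE]; lia)
  have hτK := (hplane hτ).resolve_left (card_pointsIn_pos_of_mem hxK hxτ).ne'
  obtain ⟨L, hL, hLK⟩ := hK.exists_external_line hτ hτK
  have hdvd : q + 2 ∣ ∑ ρ ∈ pencil L ⊤, #(pointsIn K ρ) := dvd_sum fun ρ hρ ↦ by
    obtain hzero | heq := hplane ((mem_pencil_top hL).mp hρ).2
    · exact hzero ▸ dvd_zero _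
    · exact heq ▸ dvd_rfl
  rw [sum_pencil_top_card_pointsIn K hE hL, hLK, card_empty, hcard] at hdvd
  obtain ⟨r, hr⟩ := Nat.exists_eq_add_of_le' hq
  have hfour : q + 2 ∣ 4 := by
    refine (Nat.dvd_add_right (Dvd.intro (q - 1) rfl)).mp (hdvd.trans (dvd_of_eq ?_))
    rw [hr, Nat.add_sub_assoc (by lia)]
    ring
  have := Nat.le_of_dvd (by lia) hfour
  lia

theorem IsNucleus.card_pointsIn_plane_le (hN : IsNucleus K N σ) (hK : IsCap K)
    (hE : finrank F E = 4) (hτ : finrank F τ = 3) (hNτ : N.submodule ≤ τ) :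
    #(pointsIn K τ) ≤ q + 1 := by
  have hdim : 2 ≤ finrank F (τ ⊓ σ : Submodule F E) := by
    have hmod := Submodule.finrank_sup_add_finrank_inf_eq τ σ
    have hsup := Submodule.finrank_le (τ ⊔ σ)
    rw [hτ, hN.finrank_eq] at hmod
    lia
  obtain ⟨L, hNL, hLinf, hL⟩ := exists_submodule_between_finrank_eq
    (le_inf hNτ hN.submodule_le) (by rw [N.finrank_submodule]; lia) hdim
  exact hK.card_pointsIn_plane_le_of_isTangent hτ
    (hN.isTangent L hNL (hLinf.trans inf_le_right) hL) (hLinf.trans inf_le_left)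

theorem IsCap.exists_isNucleus_on_isTangent (hK : IsCap K) (hE : finrank F E = 4)
    (hcard : q ^ 2 + 1 ≤ #K) (heven : Even q) (ht : IsTangent K t) :
    ∃ N σ, N.submodule ≤ t ∧ IsNucleus K N σ := by
  obtain ⟨σ, htσ, hσ, hσK⟩ := hK.exists_plane_card_eq_of_isTangent hE hcard ht
  obtain ⟨N, hNt, hN⟩ := hK.exists_isNucleus hσ hσK heven ht htσ
  exact ⟨N, σ, hNt, hN⟩

theorem IsNucleus.card_pointsIn_le_of_isSecant (hN : IsNucleus K N σ) (hK : IsCap K)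
    (hE : finrank F E = 4) (hs : IsSecant K s) (hNs : N.submodule ≤ s) :
    ∀ τ ∈ pencil s ⊤, #(pointsIn K τ) ≤ q + 1 := fun τ hτ ↦ by
  obtain ⟨hsτ, hτ⟩ := (mem_pencil_top hs.finrank_eq).mp hτ
  exact hN.card_pointsIn_plane_le hK hE hτ (hNs.trans hsτ)

-- In a maximal cap the nucleus of any plane lies on a secant, since otherwise it could be added.
theorem IsCap.card_le (hK : IsCap K) (hE : finrank F E = 4) (heven : Even q) (hq : 2 < q) :
    #K ≤ q ^ 2 + 1 := by
  obtain ⟨M, hKM, hM⟩ := (Set.toFinite {K : Finset (ℙ F E) | IsCap K}).exists_le_maximal hK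
  refine (card_le_card hKM).trans (le_of_not_gt fun hlt ↦ ?_)
  obtain ⟨t, ht⟩ := hM.prop.exists_isTangent hE (card_pos.mp (by lia)) hq
  obtain ⟨N, σ, -, hN⟩ := hM.prop.exists_isNucleus_on_isTangent hE hlt.le heven ht
  have hNsec : ∀ s, IsSecant M s → ¬ N.submodule ≤ s := fun s hs hNs ↦
    hlt.not_ge (hs.card_le_of_forall_plane_le hE
      (hN.card_pointsIn_le_of_isSecant hM.prop hE hs hNs))
  exact hN.notMem (hM.le_of_ge (hM.prop.cons hN.notMem hNsec) (subset_cons _) (mem_cons_self N M))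

theorem IsNucleus.exists_isSecant (hN : IsNucleus K N σ) (hK : IsCap K) (hE : finrank F E = 4)
    (hcard : #K = q ^ 2 + 1) (heven : Even q) (hq : 2 < q) :
    ∃ s, IsSecant K s ∧ N.submodule ≤ s := by
  by_contra! hnone
  have := (hK.cons hN.notMem hnone).card_le hE heven hq
  rw [card_cons] at this
  lia

theorem IsNucleus.le_of_isTangent (hN : IsNucleus K N σ) (hK : IsCap K) (hE : finrank F E = 4)
    (hcard : #K = q ^ 2 + 1) (heven : Even q) (hs : IsSecant K s) (hNs : N.submodule ≤ s)
    (ht : IsTangent K t) (hNt : N.submodule ≤ t) : t ≤ σ := by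
  have hne : t ≠ s := by
    rintro rfl
    have := ht.card_pointsIn.symm.trans hs.card_pointsIn
    lia
  have hsσ : ¬ s ≤ σ := fun h ↦ by
    have := (hN.isTangent s hNs h hs.finrank_eq).card_pointsIn.symm.trans hs.card_pointsIn
    lia
  have hρ : finrank F (t ⊔ s : Submodule F E) = 3 :=
    finrank_sup_of_ne hNt hNs N.finrank_submodule ht.finrank_eq hs.finrank_eq hne
  have hρK : #(pointsIn K (t ⊔ s)) = q + 1 :=
    hs.card_pointsIn_plane_eq_of_forall_le hE hcard (hN.card_pointsIn_le_of_isSecant hK hE hs hNs) _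
      ((mem_pencil_top hs.finrank_eq).mpr ⟨le_sup_right, hρ⟩)
  have hNρ := hNt.trans (le_sup_left (b := s))
  have hinf : finrank F ((t ⊔ s) ⊓ σ : Submodule F E) = 2 :=
    finrank_inf_of_ne le_top le_top hρ hN.finrank_eq (by rw [finrank_top, hE])
      fun h ↦ hsσ (h ▸ le_sup_right)
  have htan : IsTangent K ((t ⊔ s) ⊓ σ) :=
    hN.isTangent _ (le_inf hNρ hN.submodule_le) inf_le_right hinf
  have heq : t = (t ⊔ s) ⊓ σ :=
    hK.eq_of_isTangent_of_le_isSecant hρ hρK heven hs le_sup_right hNs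
      (mem_tangentsThrough.mpr ⟨hNt, le_sup_left, ht⟩)
      (mem_tangentsThrough.mpr ⟨le_inf hNρ hN.submodule_le, inf_le_left, htan⟩)
  exact heq.trans_le inf_le_right

theorem IsNucleus.card_pointsIn_le_one (hN : IsNucleus K N σ) (hK : IsCap K)
    (hE : finrank F E = 4) (hcard : #K = q ^ 2 + 1) (heven : Even q) (hq : 2 < q)
    (hτ : finrank F τ = 3) (hNτ : N.submodule ≤ τ) (hτK : #(pointsIn K τ) ≠ q + 1) :
    #(pointsIn K τ) ≤ 1 := by
  obtain ⟨s, hs, hNs⟩ := hN.exists_isSecant hK hE hcard heven hq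
  have hsub : pointsIn K τ ⊆ pointsIn K (τ ⊓ σ) := fun u hu ↦ by
    obtain ⟨huK, huτ⟩ := mem_pointsIn.mp hu
    have hNu : N ≠ u := fun h ↦ hN.notMem (h ▸ huK)
    have hline := finrank_submodule_sup_submodule hNu
    have hnotsec : ¬ IsSecant K (N.submodule ⊔ u.submodule) := fun hsec ↦
      hτK (hsec.card_pointsIn_plane_eq_of_forall_le hE hcard
        (hN.card_pointsIn_le_of_isSecant hK hE hsec le_sup_left) τ
        ((mem_pencil_top hline).mpr ⟨sup_le hNτ huτ, hτ⟩))
    have htan := (hK.isTangent_or_isSecant hline huK le_sup_right).resolve_right hnotsec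
    have hle := hN.le_of_isTangent hK hE hcard heven hs hNs htan le_sup_left
    exact mem_pointsIn.mpr ⟨huK, le_inf huτ (le_sup_right.trans hle)⟩
  have hinf : finrank F (τ ⊓ σ : Submodule F E) = 2 :=
    finrank_inf_of_ne le_top le_top hτ hN.finrank_eq (by rw [finrank_top, hE])
      fun h ↦ hτK (h ▸ hN.card_pointsIn)
  have htan := hN.isTangent _ (le_inf hNτ hN.submodule_le) inf_le_right hinf
  exact (card_le_card hsub).trans_eq htan.card_pointsIn

/-! ### Caps with `q ^ 2 + 1` points -/

theorem IsCap.card_pointsIn_plane_le_of_card_eq (hK : IsCap K) (hE : finrank F E = 4)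
    (hcard : #K = q ^ 2 + 1) (hq : 2 < q) (hπ : finrank F π = 3) :
    #(pointsIn K π) ≤ q + 1 := by
  by_contra! hlt
  have hπK : #(pointsIn K π) = q + 2 := (hK.card_pointsIn_plane_le hπ).antisymm hlt
  have heven := hK.even_card_of_card_pointsIn_plane_eq hπ hπK
  obtain ⟨x, hxK, hxπ⟩ := exists_mem_of_card_pointsIn_pos (K := K) (X := π) (by lia)
  obtain ⟨t, hxt, ht⟩ := hK.exists_isTangent_of_mem hE (by lia) hxK
  obtain ⟨N, σ, hNt, hN⟩ := hK.exists_isNucleus_on_isTangent hE hcard.ge heven ht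
  obtain ⟨τ, htτ, hτ, hτK⟩ := ht.exists_plane_card_ne hE (by lia)
  have hτ_le := hN.card_pointsIn_le_one hK hE hcard heven hq hτ (hNt.trans htτ) hτK
  have hinf : finrank F (π ⊓ τ : Submodule F E) = 2 :=
    finrank_inf_of_ne le_top le_top hπ hτ (by rw [finrank_top, hE]) fun h ↦ by
      rw [h] at hlt
      lia
  have htan : IsTangent K (π ⊓ τ) :=
    ⟨hinf, ((card_pointsIn_mono K inf_le_right).trans hτ_le).antisymm
      (card_pointsIn_pos_of_mem hxK (le_inf hxπ (hxt.trans htτ)))⟩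
  exact hlt.not_ge (hK.card_pointsIn_plane_le_of_isTangent hπ htan inf_le_left)

theorem IsCap.card_pointsIn_plane_eq_of_one_lt (hK : IsCap K) (hE : finrank F E = 4)
    (hcard : #K = q ^ 2 + 1) (hq : 2 < q) (hτ : finrank F τ = 3) (hτK : 1 < #(pointsIn K τ)) :
    #(pointsIn K τ) = q + 1 := by
  obtain ⟨x, hx, y, hy, hne⟩ := one_lt_card.mp hτK
  obtain ⟨hxK, hxτ⟩ := mem_pointsIn.mp hx
  obtain ⟨hyK, hyτ⟩ := mem_pointsIn.mp hy
  have hs := hK.isSecant_sup hxK hyK hne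
  refine hs.card_pointsIn_plane_eq_of_forall_le hE hcard (fun ρ hρ ↦ ?_) τ
    ((mem_pencil_top hs.finrank_eq).mpr ⟨sup_le hxτ hyτ, hτ⟩)
  exact hK.card_pointsIn_plane_le_of_card_eq hE hcard hq ((mem_pencil_top hs.finrank_eq).mp hρ).2

theorem IsCap.exists_plane_card_eq_one (hK : IsCap K) (hE : finrank F E = 4)
    (hcard : #K = q ^ 2 + 1) (hq : 2 < q) :
    ∃ τ : Submodule F E, finrank F τ = 3 ∧ #(pointsIn K τ) = 1 := by
  obtain ⟨x, hxK⟩ : K.Nonempty := card_pos.mp (by lia)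
  obtain ⟨t, hxt, ht⟩ := hK.exists_isTangent_of_mem hE (by lia) hxK
  obtain ⟨τ, htτ, hτ, hne⟩ := ht.exists_plane_card_ne hE (by lia)
  have hpos := card_pointsIn_pos_of_mem hxK (hxt.trans htτ)
  refine ⟨τ, hτ, (not_lt.mp fun hlt ↦ hne ?_).antisymm hpos⟩
  exact hK.card_pointsIn_plane_eq_of_one_lt hE hcard hq hτ hlt

-- The `q + 1` planes on the line where a plane missing `K` meets a plane with one point would
-- carry at most `0 + 1 + (q - 1) * (q + 1) = q ^ 2` points of `K`.
theorem IsCap.card_pointsIn_plane_pos (hK : IsCap K) (hE : finrank F E = 4)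
    (hcard : #K = q ^ 2 + 1) (hq : 2 < q) (hπ : finrank F π = 3) : 0 < #(pointsIn K π) := by
  classical
  by_contra! hzero
  obtain ⟨τ, hτ, hτK⟩ := hK.exists_plane_card_eq_one hE hcard hq
  have hne : π ≠ τ := by
    rintro rfl
    lia
  have hL : finrank F (π ⊓ τ : Submodule F E) = 2 :=
    finrank_inf_of_ne le_top le_top hπ hτ (by rw [finrank_top, hE]) hne
  have hLK : #(pointsIn K (π ⊓ τ)) = 0 :=
    Nat.le_zero.mp ((card_pointsIn_mono K inf_le_left).trans hzero)
  have hπmem : π ∈ pencil (π ⊓ τ) ⊤ := (mem_pencil_top hL).mpr ⟨inf_le_left, hπ⟩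
  have hτmem : τ ∈ (pencil (π ⊓ τ) ⊤).erase π :=
    mem_erase.mpr ⟨hne.symm, (mem_pencil_top hL).mpr ⟨inf_le_right, hτ⟩⟩
  have hrest : ∑ ρ ∈ ((pencil (π ⊓ τ) ⊤).erase π).erase τ, #(pointsIn K ρ) ≤ (q - 1) * (q + 1) := by
    refine (sum_le_card_nsmul _ _ (q + 1) fun ρ hρ ↦ ?_).trans_eq ?_
    · exact hK.card_pointsIn_plane_le_of_card_eq hE hcard hq
        ((mem_pencil_top hL).mp (mem_of_mem_erase (mem_of_mem_erase hρ))).2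
    · rw [card_erase_of_mem hτmem, card_erase_of_mem hπmem, card_pencil_top hE hL, smul_eq_mul,
        Nat.add_sub_cancel]
  have hsum := sum_pencil_top_card_pointsIn K hE hL
  rw [← add_sum_erase _ _ hπmem, ← add_sum_erase _ _ hτmem, hτK, hLK, hcard] at hsum
  have hsq : (q - 1) * (q + 1) + 1 = q ^ 2 := by
    obtain ⟨r, hr⟩ := Nat.exists_eq_add_of_le' hq
    rw [hr, Nat.add_sub_assoc (by lia)]
    ring
  lia

theorem plane_meets_ovoid_in_one_or_q_add_one_points_general (hK : IsCap K)
    (hE : finrank F E = 4) (hcard : #K = q ^ 2 + 1) (hq : 2 < q) (hπ : finrank F π = 3) :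
    #(pointsIn K π) = 1 ∨ #(pointsIn K π) = q + 1 := by
  have hpos := hK.card_pointsIn_plane_pos hE hcard hq hπ
  rcases (Nat.succ_le_of_lt hpos).eq_or_lt with hone | hlt
  · exact .inl hone.symm
  · exact .inr (hK.card_pointsIn_plane_eq_of_one_lt hE hcard hq hπ hlt)

end Caps

/-- Every plane of PG(3,q) (three-dimensional GF(q)-subspace of GF(q)⁴)
meets an ovoid V in either exactly 1 point or exactly q+1 points.  The ovoid is given
by a set V of q²+1 nonzero, pairwise non-proportional spanning vectors (one per point),
no three of which are linearly dependent. -/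
theorem plane_meets_ovoid_in_one_or_q_add_one_points {q : ℕ}
    (F : Type) [Field F] [Fintype F]
    (hF : Fintype.card F = q) (hq : 2 < q)
    (V : Set (Fin 4 → F))
    (hcard : V.ncard = q ^ 2 + 1)
    (hnz : ∀ v ∈ V, v ≠ 0)
    (hprop : ∀ u ∈ V, ∀ v ∈ V, u ≠ v → ∀ c : F, v ≠ c • u)
    (hind : ∀ u ∈ V, ∀ v ∈ V, ∀ w ∈ V, u ≠ v → u ≠ w → v ≠ w →
      LinearIndependent F ![u, v, w])
    (W : Submodule F (Fin 4 → F)) (hW : Module.finrank F W = 3) :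
    {v ∈ V | v ∈ W}.ncard = 1 ∨ {v ∈ V | v ∈ W}.ncard = q + 1 := by
  obtain ⟨K, hK, hpoints⟩ := exists_isCap_card_pointsIn_eq_ncard (Set.toFinite V) hnz hprop hind
  have hKcard : #K = q ^ 2 + 1 := by
    simpa only [pointsIn_top, Submodule.mem_top, and_true, Set.ofPred_mem_eq, hcard]
      using hpoints ⊤
  rw [← hF, ← Nat.card_eq_fintype_card] at hq hKcard ⊢
  rw [← hpoints]
  exact plane_meets_ovoid_in_one_or_q_add_one_points_general hK (finrank_fin_fun F) hKcard hq hW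
end

section
/- Let q be a prime power, r a power of q, α a primitive element of GF(r), and e₁ a positive divisor of r−1. Put d = gcd((r−1)/(q−1), e₁) and fix an integer i with 0 ≤ i < e₁. Then for every x ∈ C_i^{(e₁,r)} and y ∈ GF(q)^*, the product xy lies in C_i^{(d,r)}, and for every z ∈ C_i^{(d,r)} the number of pairs (x, y) with x ∈ C_i^{(e₁,r)}, y ∈ GF(q)^* and xy = z equals (q−1)·d/e₁. -/
/-!
Let `G = GF(r)^*`, `K = GF(q)^*` and `H = ⟨α ^ e₁⟩`. A pair `(x, y)` with `x * y = z` is determined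
by `y`, which only has to lie in a prescribed coset of `H`; the solutions `y` therefore form a coset
of `H ∩ K`, and `|H ∩ K| * [G : H] = |K| * [G : HK]` by the second isomorphism theorem. As `G` is
cyclic, `K` is generated by `α ^ ((r - 1) / (q - 1))`, so that Bézout gives `HK = ⟨α ^ d⟩`.
-/

section Index

variable {A G : Type*} [Group A] [Group G] (f : A →* G) (H : Subgroup G) [H.Normal]

theorem card_comap_mul_index :
    Nat.card (H.comap f) * H.index = Nat.card A * (H ⊔ f.range).index :=
  calc Nat.card (H.comap f) * H.index
      = Nat.card (H.comap f) * (H.relIndex f.range * (H ⊔ f.range).index) := by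
        rw [← Subgroup.relIndex_sup_left, Subgroup.relIndex_mul_index le_sup_left]
    _ = Nat.card A * (H ⊔ f.range).index := by
        rw [← Subgroup.index_comap, ← mul_assoc, Subgroup.card_mul_index]

variable {f H}

theorem ncard_setOf_mul_inv_mem {w : G} (hw : w ∈ H ⊔ f.range) :
    {a | w * (f a)⁻¹ ∈ H}.ncard = Nat.card (H.comap f) := by
  obtain ⟨h, hh, _, ⟨b, rfl⟩, rfl⟩ := Subgroup.mem_sup_of_normal_left.mp hw
  have preimage_eq : {a | h * f b * (f a)⁻¹ ∈ H} = Equiv.divLeft b ⁻¹' (H.comap f : Set A) := by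
    ext a
    simp [mul_assoc, Subgroup.mul_mem_cancel_left H hh, div_eq_mul_inv]
  rw [preimage_eq, Set.ncard_preimage_of_injective_subset_range (Equiv.injective _) (by simp)]
  rfl

theorem ncard_setOf_mul_inv_mem_mul_index {w : G} (hw : w ∈ H ⊔ f.range) :
    {a | w * (f a)⁻¹ ∈ H}.ncard * H.index = Nat.card A * (H ⊔ f.range).index := by
  rw [ncard_setOf_mul_inv_mem hw, card_comap_mul_index]

end Index

theorem zpowers_pow_sup_zpowers_pow {G : Type*} [Group G] (g : G) (m n : ℕ) :
    Subgroup.zpowers (g ^ m) ⊔ Subgroup.zpowers (g ^ n) = Subgroup.zpowers (g ^ m.gcd n) := by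
  apply le_antisymm
  · have zpowers_le {k : ℕ} (hk : m.gcd n ∣ k) :
        Subgroup.zpowers (g ^ k) ≤ Subgroup.zpowers (g ^ m.gcd n) := by
      obtain ⟨c, rfl⟩ := hk
      simpa only [Subgroup.zpowers_le, pow_mul] using Subgroup.npow_mem_zpowers _ c
    exact sup_le (zpowers_le (m.gcd_dvd_left n)) (zpowers_le (m.gcd_dvd_right n))
  · have bezout : g ^ m.gcd n = (g ^ m) ^ m.gcdA n * (g ^ n) ^ m.gcdB n := by
      rw [← zpow_natCast, Nat.gcd_eq_gcd_ab, zpow_add, zpow_mul, zpow_mul, zpow_natCast,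
        zpow_natCast]
    rw [Subgroup.zpowers_le, bezout]
    exact Subgroup.mul_mem_sup (Subgroup.zpow_mem_zpowers _ _) (Subgroup.zpow_mem_zpowers _ _)

section Cyclic

variable {G : Type*} [CommGroup G] [Finite G] {g : G}

theorem index_zpowers_pow_of_dvd (hg : ∀ x, x ∈ Subgroup.zpowers g) {n : ℕ}
    (hn : n ∣ Nat.card G) :
    (Subgroup.zpowers (g ^ n)).index = n := by
  have : IsCyclic G := ⟨g, hg⟩
  have range_eq : (powMonoidHom n : G →* G).range = Subgroup.zpowers (g ^ n) := by
    rw [MonoidHom.range_eq_map, ← (Subgroup.eq_top_iff' _).mpr hg, MonoidHom.map_zpowers,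
      powMonoidHom_apply]
  rw [← range_eq, IsCyclic.index_powMonoidHom_range, Nat.gcd_eq_right hn]

theorem zpowers_pow_index (hg : ∀ x, x ∈ Subgroup.zpowers g) (K : Subgroup G) :
    Subgroup.zpowers (g ^ K.index) = K := by
  have card_eq : Nat.card K = Nat.card (Subgroup.zpowers (g ^ K.index)) :=
    Nat.eq_of_mul_eq_mul_right K.index_ne_zero_of_finite.bot_lt <|
      calc Nat.card K * K.index
          = Nat.card (Subgroup.zpowers (g ^ K.index)) * (Subgroup.zpowers (g ^ K.index)).index := by
            rw [Subgroup.card_mul_index, Subgroup.card_mul_index]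
        _ = Nat.card (Subgroup.zpowers (g ^ K.index)) * K.index := by
            rw [index_zpowers_pow_of_dvd hg K.index_dvd_card]
  exact Subgroup.eq_of_le_of_card_ge (Subgroup.zpowers_le.mpr (K.pow_index_mem g)) card_eq.le

theorem zpowers_pow_sup_eq_zpowers_pow_gcd_index (hg : ∀ x, x ∈ Subgroup.zpowers g) (n : ℕ)
    (K : Subgroup G) :
    Subgroup.zpowers (g ^ n) ⊔ K = Subgroup.zpowers (g ^ K.index.gcd n) := by
  rw [← zpowers_pow_sup_zpowers_pow, zpowers_pow_index hg, sup_comm]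

end Cyclic

/-- The cyclotomic class `C_i^{(N)} = a ^ i ⟨a ^ N⟩` with respect to `a`. Only natural exponents
are used, which yields the full coset of the subgroup as soon as `a` has finite order. -/
def cyclotomicClass {M : Type*} [Monoid M] (a : M) (N i : ℕ) : Set M :=
  {x | ∃ j : ℕ, x = a ^ i * (a ^ N) ^ j}

section CyclotomicClass

variable {M : Type*} [Monoid M] {a : Mˣ} {N i : ℕ}

theorem isUnit_of_mem_cyclotomicClass {x : M} (hx : x ∈ cyclotomicClass (a : M) N i) :
    IsUnit x := by
  obtain ⟨j, rfl⟩ := hx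
  exact (a.isUnit.pow i).mul ((a.isUnit.pow N).pow j)

theorem val_mem_cyclotomicClass_iff [Finite Mˣ] {u : Mˣ} :
    (u : M) ∈ cyclotomicClass (a : M) N i ↔ (a ^ i)⁻¹ * u ∈ Subgroup.zpowers (a ^ N) := by
  rw [← mem_powers_iff_mem_zpowers]
  refine exists_congr fun j ↦ ?_
  rw [eq_inv_mul_iff_mul_eq, eq_comm, Units.ext_iff]
  push_cast
  rfl

theorem setOf_cyclotomicClass_mul_map_eq_image {F : Type*} [GroupWithZero F] [Finite Mˣ]
    (φ : F →* M) (z : Mˣ) :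
    {p : M × F | p.1 ∈ cyclotomicClass (a : M) N i ∧ p.2 ≠ 0 ∧ p.1 * φ p.2 = z} =
      (fun y : Fˣ ↦ (((z * (Units.map φ y)⁻¹ : Mˣ) : M), (y : F))) ''
        {y | (a ^ i)⁻¹ * z * (Units.map φ y)⁻¹ ∈ Subgroup.zpowers (a ^ N)} := by
  ext ⟨x, y⟩
  simp only [Set.mem_ofPred_eq, Set.mem_image, Prod.mk.injEq, mul_assoc,
    ← val_mem_cyclotomicClass_iff]
  constructor
  · rintro ⟨hx, hy, hxy⟩
    have hz : ((z * (Units.map φ (Units.mk0 y hy))⁻¹ : Mˣ) : M) = x := by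
      rw [Units.val_mul, ← hxy, Units.mul_inv_eq_iff_eq_mul]
      simp
    exact ⟨Units.mk0 y hy, hz ▸ hx, hz, rfl⟩
  · rintro ⟨u, hu, rfl, rfl⟩
    refine ⟨hu, u.ne_zero, ?_⟩
    rw [← Units.coe_map, ← Units.val_mul, inv_mul_cancel_right]

end CyclotomicClass

section PrimitiveElement

variable {M F : Type*} [CommMonoid M] [Finite Mˣ] [GroupWithZero F] (φ : F →* M) {a : Mˣ} {N i : ℕ}

theorem mul_map_mem_cyclotomicClass (ha : ∀ u, u ∈ Subgroup.zpowers a) {x : M}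
    (hx : x ∈ cyclotomicClass (a : M) N i) {y : F} (hy : y ≠ 0) :
    x * φ y ∈ cyclotomicClass (a : M) ((Units.map φ).range.index.gcd N) i := by
  lift x to Mˣ using isUnit_of_mem_cyclotomicClass hx
  lift y to Fˣ using hy.isUnit
  rw [← Units.coe_map, ← Units.val_mul, val_mem_cyclotomicClass_iff, ← mul_assoc,
    ← zpowers_pow_sup_eq_zpowers_pow_gcd_index ha]
  exact Subgroup.mul_mem_sup (val_mem_cyclotomicClass_iff.mp hx) ⟨y, rfl⟩

theorem ncard_cyclotomicClass_mul_map_eq_mul (ha : ∀ u, u ∈ Subgroup.zpowers a) {z : M}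
    (hN : N ∣ Nat.card Mˣ)
    (hz : z ∈ cyclotomicClass (a : M) ((Units.map φ).range.index.gcd N) i) :
    {p : M × F | p.1 ∈ cyclotomicClass (a : M) N i ∧ p.2 ≠ 0 ∧ p.1 * φ p.2 = z}.ncard * N =
      Nat.card Fˣ * (Units.map φ).range.index.gcd N := by
  lift z to Mˣ using isUnit_of_mem_cyclotomicClass hz
  have hsup := zpowers_pow_sup_eq_zpowers_pow_gcd_index ha N (Units.map φ).range
  have hw : (a ^ i)⁻¹ * z ∈ Subgroup.zpowers (a ^ N) ⊔ (Units.map φ).range :=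
    hsup ▸ val_mem_cyclotomicClass_iff.mp hz
  have pair_injective : Function.Injective
      fun y : Fˣ ↦ (((z * (Units.map φ y)⁻¹ : Mˣ) : M), (y : F)) :=
    fun _ _ h ↦ Units.ext (Prod.mk.inj h).2
  have hcount := ncard_setOf_mul_inv_mem_mul_index hw
  rwa [hsup, index_zpowers_pow_of_dvd ha hN,
    index_zpowers_pow_of_dvd ha ((Nat.gcd_dvd_right _ _).trans hN),
    ← Set.ncard_image_of_injective _ pair_injective,
    ← setOf_cyclotomicClass_mul_map_eq_image] at hcount

end PrimitiveElement

theorem index_range_unitsMap {F E : Type*} [DivisionRing F] [Finite F] [DivisionRing E]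
    (φ : F →+* E) :
    (Units.map (φ : F →* E)).range.index = (Nat.card E - 1) / (Nat.card F - 1) := by
  have card_range : Nat.card (Units.map (φ : F →* E)).range = Nat.card F - 1 := by
    rw [← Nat.card_units]
    exact (Nat.card_congr (MonoidHom.ofInjective (Units.map_injective φ.injective)).toEquiv).symm
  refine (Nat.div_eq_of_eq_mul_left (Nat.sub_pos_of_lt Finite.one_lt_card) ?_).symm
  rw [← card_range, Subgroup.index_mul_card, Nat.card_units]

/-- Lemma 2 of the paper: Let q be a prime power, r a power of q,
α a primitive element of GF(r), e₁ a positive divisor of r−1,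
d = gcd((r−1)/(q−1), e₁), and 0 ≤ i < e₁.  Then products xy with x ∈ C_i^{(e₁,r)} and
y ∈ GF(q)^* lie in C_i^{(d,r)}, and every z ∈ C_i^{(d,r)} arises from exactly
(q−1)·d/e₁ pairs (x, y). -/
theorem cyclotomic_class_multiset_lemma {q r : ℕ}
    (F E : Type) [Field F] [Fintype F] [Field E] [Fintype E] [Algebra F E]
    (hF : Fintype.card F = q) (hE : Fintype.card E = r)
    (hr : ∃ t : ℕ, 0 < t ∧ r = q ^ t)
    (α : Eˣ) (hα : ∀ x : Eˣ, x ∈ Subgroup.zpowers α)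
    (e₁ : ℕ) (he₁ : 0 < e₁) (hdvd : e₁ ∣ r - 1)
    (i : ℕ) (hi : i < e₁) :
    let Ci : ℕ → Set E := fun N => {x : E | ∃ j : ℕ, x = (α : E) ^ i * ((α : E) ^ N) ^ j}
    let d : ℕ := Nat.gcd ((r - 1) / (q - 1)) e₁
    (∀ x ∈ Ci e₁, ∀ y : F, y ≠ 0 → x * algebraMap F E y ∈ Ci d) ∧
    (∀ z ∈ Ci d,
      {p : E × F | p.1 ∈ Ci e₁ ∧ p.2 ≠ 0 ∧ p.1 * algebraMap F E p.2 = z}.ncard * e₁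
        = (q - 1) * d) := by
  intro Ci d
  have hindex : (Units.map (algebraMap F E : F →* E)).range.index = (r - 1) / (q - 1) := by
    rw [index_range_unitsMap, Nat.card_eq_fintype_card, Nat.card_eq_fintype_card, hE, hF]
  have hcardF : Nat.card Fˣ = q - 1 := by rw [Nat.card_units, Nat.card_eq_fintype_card, hF]
  have hcardE : Nat.card Eˣ = r - 1 := by rw [Nat.card_units, Nat.card_eq_fintype_card, hE]
  have hd : d = (Units.map (algebraMap F E : F →* E)).range.index.gcd e₁ := by rw [hindex]
  rw [hd, ← hcardF]
  exact ⟨fun x hx y hy ↦ mul_map_mem_cyclotomicClass (algebraMap F E : F →* E) hα hx hy,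
    fun z hz ↦ ncard_cyclotomicClass_mul_map_eq_mul (algebraMap F E : F →* E) hα (hcardE ▸ hdvd) hz⟩
end
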